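/- arXiv:1703.04787 — 9 statements merged into one kernel-verified Lean document; each statement's English description precedes it below -/
import Mathlib

section
/- Let R be a ring, let 𝒳 be a class of right R-modules closed under isomorphisms and direct summands such that every right R-module M has a monomorphic 𝒳-envelope v_M : M → X(M), and let u : N → M be a homomorphism of right R-modules. Then the following are equivalent: (1) u is an 𝒳-strongly pure monomorphism; (2) the 𝒳-envelope v_N : N → X(N) factors through u, i.e. there exists a homomorphism g : M → X(N) with g ∘ u = v_N; (3) the composition v_M ∘ u : N → X(M) is an 𝒳-preenvelope of N. -/
/-!
Schröder-Bernstein problem for modules (Guil Asensio, Kaleboğaz, Srivastava).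
We formalize "right R-modules" as Lean `Module R` modules (the theory is side-symmetric).
A class of modules is a predicate on modules (in a fixed universe `u`).
-/

universe u

variable (R : Type u) [Ring R]

/-- The class `𝒳` of modules, as a predicate on `R`-modules. -/
abbrev ModClass := ∀ (X : Type u) [AddCommGroup X] [Module R X], Prop

/-- `X` is a direct summand of `Y`. -/
def IsDirectSummandOf (X Y : Type u) [AddCommGroup X] [Module R X]
    [AddCommGroup Y] [Module R Y] : Prop :=
  ∃ (i : X →ₗ[R] Y) (p : Y →ₗ[R] X), p ∘ₗ i = LinearMap.id

/-- `𝒳` is closed under isomorphisms. -/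
def ClosedUnderIsos (𝒳 : ModClass R) : Prop :=
  ∀ (X Y : Type u) [AddCommGroup X] [Module R X] [AddCommGroup Y] [Module R Y],
    Nonempty (X ≃ₗ[R] Y) → 𝒳 X → 𝒳 Y

/-- `𝒳` is closed under direct summands. -/
def ClosedUnderSummands (𝒳 : ModClass R) : Prop :=
  ∀ (X Y : Type u) [AddCommGroup X] [Module R X] [AddCommGroup Y] [Module R Y],
    IsDirectSummandOf R X Y → 𝒳 Y → 𝒳 X

/-- `u : M → X` is an `𝒳`-preenvelope of `M`: `X ∈ 𝒳` and every homomorphism from `M`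
to a member of `𝒳` factors through `u`. -/
def IsPreenvelope (𝒳 : ModClass R) {M X : Type u} [AddCommGroup M] [Module R M]
    [AddCommGroup X] [Module R X] (u : M →ₗ[R] X) : Prop :=
  𝒳 X ∧ ∀ (X' : Type u) [AddCommGroup X'] [Module R X'], 𝒳 X' →
    ∀ g : M →ₗ[R] X', ∃ h : X →ₗ[R] X', h ∘ₗ u = g

/-- `u : M → X` is an `𝒳`-envelope: a preenvelope such that any endomorphism `h` of `X`
with `h ∘ u = u` is an automorphism. -/
def IsEnvelope (𝒳 : ModClass R) {M X : Type u} [AddCommGroup M] [Module R M]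
    [AddCommGroup X] [Module R X] (u : M →ₗ[R] X) : Prop :=
  IsPreenvelope R 𝒳 u ∧ ∀ h : X →ₗ[R] X, h ∘ₗ u = u → Function.Bijective h

/-- Every `R`-module has a monomorphic `𝒳`-envelope. -/
def HasMonoEnvelopes (𝒳 : ModClass R) : Prop :=
  ∀ (M : Type u) [AddCommGroup M] [Module R M],
    ∃ (X : Type u) (_ : AddCommGroup X) (_ : Module R X) (u : M →ₗ[R] X),
      Function.Injective u ∧ IsEnvelope R 𝒳 u

/-- `u : N → M` is an `𝒳`-strongly pure monomorphism: every homomorphism `f : N → X`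
with `X ∈ 𝒳` extends to `g : M → X` with `g ∘ u = f`. -/
def IsStronglyPureMono (𝒳 : ModClass R) {N M : Type u} [AddCommGroup N] [Module R N]
    [AddCommGroup M] [Module R M] (u : N →ₗ[R] M) : Prop :=
  ∀ (X : Type u) [AddCommGroup X] [Module R X], 𝒳 X →
    ∀ f : N →ₗ[R] X, ∃ g : M →ₗ[R] X, g ∘ₗ u = f

/-- **Lemma 2.1.** For a homomorphism `u : N → M`, the following are equivalent:
(1) `u` is an `𝒳`-strongly pure monomorphism;
(2) the `𝒳`-envelope `v_N : N → X(N)` factors through `u`;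
(3) `v_M ∘ u : N → X(M)` is an `𝒳`-preenvelope. -/
theorem stmt0 (𝒳 : ModClass R) (hiso : ClosedUnderIsos R 𝒳)
    (hsum : ClosedUnderSummands R 𝒳) (henv : HasMonoEnvelopes R 𝒳)
    {N M XN XM : Type u} [AddCommGroup N] [Module R N] [AddCommGroup M] [Module R M]
    [AddCommGroup XN] [Module R XN] [AddCommGroup XM] [Module R XM]
    (vN : N →ₗ[R] XN) (hvN : Function.Injective vN ∧ IsEnvelope R 𝒳 vN)
    (vM : M →ₗ[R] XM) (hvM : Function.Injective vM ∧ IsEnvelope R 𝒳 vM)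
    (u : N →ₗ[R] M) :
    List.TFAE [IsStronglyPureMono R 𝒳 u,
      ∃ g : M →ₗ[R] XN, g ∘ₗ u = vN,
      IsPreenvelope R 𝒳 (vM ∘ₗ u)] := by
  tfae_have 1 → 2 := fun h => h XN hvN.2.1.1 vN
  tfae_have 2 → 3 := by
    rintro ⟨g, hg⟩
    refine ⟨hvM.2.1.1, fun X' _ _ hX' f => ?_⟩
    obtain ⟨k, hk⟩ := hvN.2.1.2 X' hX' f
    obtain ⟨l, hl⟩ := hvM.2.1.2 X' hX' (k ∘ₗ g)
    refine ⟨l, ?_⟩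
    rw [← LinearMap.comp_assoc, hl, LinearMap.comp_assoc, hg, hk]
  tfae_have 3 → 1 := by
    intro h X _ _ hX f
    obtain ⟨k, hk⟩ := h.2 X hX f
    exact ⟨k ∘ₗ vM, by rw [LinearMap.comp_assoc, hk]⟩
  tfae_finish
end

section
/- Let R be a ring and let 𝒳 be a class of right R-modules closed under isomorphisms and direct summands such that every right R-module has a monomorphic 𝒳-envelope. Let X ∈ 𝒳 be an 𝒳-strongly purely closed module and let Y ∈ 𝒳 be an 𝒳-strongly pure submodule of X. If there exists an 𝒳-strongly pure monomorphism u : X → Y, then X ≅ Y. -/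
/-!
Schröder-Bernstein problem for modules (Guil Asensio, Kaleboğaz, Srivastava).
We formalize "right R-modules" as Lean `Module R` modules (the theory is side-symmetric).
A class of modules is a predicate on modules (in a fixed universe `u`).
-/

universe u

variable (R : Type u) [Ring R]

/-- `A ∈ add[M]`: `A` is a direct summand of a finite direct sum of copies of `M`. -/
def InAdd (M : Type u) [AddCommGroup M] [Module R M]
    (A : Type u) [AddCommGroup A] [Module R A] : Prop :=
  ∃ n : ℕ, IsDirectSummandOf R A (Fin n → M)

/-- `M` is `𝒳`-strongly purely closed: any direct limit of splitting monomorphisms among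
objects of `add[M]` is an `𝒳`-strongly pure monomorphism. -/
def IsStronglyPurelyClosed (𝒳 : ModClass R) (M : Type u) [AddCommGroup M] [Module R M] :
    Prop :=
  ∀ (ι : Type u) [Preorder ι] [IsDirected ι (· ≤ ·)] [Nonempty ι] [DecidableEq ι]
    (A B : ι → Type u) [∀ i, AddCommGroup (A i)] [∀ i, Module R (A i)]
    [∀ i, AddCommGroup (B i)] [∀ i, Module R (B i)]
    (fA : ∀ i j, i ≤ j → A i →ₗ[R] A j) (fB : ∀ i j, i ≤ j → B i →ₗ[R] B j)
    [DirectedSystem A fun i j h => fA i j h] [DirectedSystem B fun i j h => fB i j h],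
    (∀ i, InAdd R M (A i)) → (∀ i, InAdd R M (B i)) →
    ∀ (g : ∀ i, A i →ₗ[R] B i) (hg : ∀ i j h, g j ∘ₗ fA i j h = fB i j h ∘ₗ g i),
      (∀ i, ∃ p : B i →ₗ[R] A i, p ∘ₗ g i = LinearMap.id) →
      IsStronglyPureMono R 𝒳 (Module.DirectLimit.map g hg)

def splitEquiv {A B : Type u} [AddCommGroup A] [Module R A] [AddCommGroup B] [Module R B]
    (p : A →ₗ[R] B) (i : B →ₗ[R] A) (h : ∀ b, p (i b) = b) :
    A ≃ₗ[R] (LinearMap.ker p × B) :=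
  LinearEquiv.ofLinear
    (LinearMap.prod ((LinearMap.id - i ∘ₗ p).codRestrict (LinearMap.ker p)
      (fun a => by simp [h])) p)
    (LinearMap.coprod (LinearMap.ker p).subtype i)
    (by
      apply LinearMap.ext
      rintro ⟨⟨k, hk⟩, b⟩
      have hk' : p k = 0 := hk
      ext <;> simp [h, hk'])
    (by ext a; simp)

theorem envelope_unique (𝒳 : ModClass R) {M E F : Type u} [AddCommGroup M] [Module R M]
    [AddCommGroup E] [Module R E] [AddCommGroup F] [Module R F]
    (e : M →ₗ[R] E) (f : M →ₗ[R] F) (he : IsEnvelope R 𝒳 e) (hf : IsEnvelope R 𝒳 f) :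
    Nonempty (E ≃ₗ[R] F) := by
  obtain ⟨a, ha⟩ := he.1.2 F hf.1.1 f
  obtain ⟨b, hb⟩ := hf.1.2 E he.1.1 e
  have h1 := he.2 (b ∘ₗ a) (by rw [LinearMap.comp_assoc, ha, hb])
  have h2 := hf.2 (a ∘ₗ b) (by rw [LinearMap.comp_assoc, hb, ha])
  refine ⟨LinearEquiv.ofBijective a ⟨?_, ?_⟩⟩
  · exact Function.Injective.of_comp (f := b) (by simpa using h1.1)
  · exact Function.Surjective.of_comp (g := b) (by simpa using h2.2)

theorem envelope_prod (𝒳 : ModClass R) {H N E : Type u} [AddCommGroup H] [Module R H]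
    [AddCommGroup N] [Module R N] [AddCommGroup E] [Module R E]
    (e : N →ₗ[R] E) (he : IsEnvelope R 𝒳 e) (hHE : 𝒳 (H × E)) :
    IsEnvelope R 𝒳 (LinearMap.prodMap (LinearMap.id : H →ₗ[R] H) e) := by
  refine ⟨⟨hHE, ?_⟩, ?_⟩
  · intro Z _ _ hZ g
    obtain ⟨k, hk⟩ := he.1.2 Z hZ (g ∘ₗ LinearMap.inr R H N)
    refine ⟨LinearMap.coprod (g ∘ₗ LinearMap.inl R H N) k, ?_⟩
    apply LinearMap.ext
    rintro ⟨x, n⟩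
    have := LinearMap.congr_fun hk n
    simp only [LinearMap.comp_apply] at this
    simp [this, ← map_add]
  · intro h hh
    have h1 : ∀ x : H, h (x, 0) = (x, 0) := fun x => by
      have := LinearMap.congr_fun hh (x, 0)
      simpa using this
    have h2 : ∀ n : N, h (0, e n) = (0, e n) := fun n => by
      have := LinearMap.congr_fun hh (0, n)
      simpa using this
    have hd := he.2 (LinearMap.snd R H E ∘ₗ h ∘ₗ LinearMap.inr R H E) (by
      ext n; simp [h2])
    have hdec : ∀ x y, h (x, y) = (x + (h (0, y)).1, (h (0, y)).2) := fun x y => by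
      have : ((x, y) : H × E) = (x, 0) + (0, y) := by simp
      rw [this, map_add, h1]
      ext <;> simp
    constructor
    · rw [injective_iff_map_eq_zero]
      rintro ⟨x, y⟩ hxy
      rw [hdec, Prod.mk_eq_zero] at hxy
      have hy : y = 0 := (injective_iff_map_eq_zero _).1 hd.1 y (by simpa using hxy.2)
      subst hy
      have h0 : h (0, 0) = 0 := map_zero h
      simpa [h0] using hxy.1
    · rintro ⟨x, y⟩
      obtain ⟨y', hy'⟩ := hd.2 y
      refine ⟨(x - (h (0, y')).1, y'), ?_⟩
      rw [hdec]
      ext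
      · simp
      · simpa using hy'

/-- The map from the countable direct sum is strongly pure. -/
theorem pure_of_coords (𝒳 : ModClass R) {X H : Type u} [AddCommGroup X] [Module R X]
    [AddCommGroup H] [Module R H] (hX : IsStronglyPurelyClosed R 𝒳 X)
    (φ : (ℕ →₀ H) →ₗ[R] X) (c : ℕ → X →ₗ[R] H)
    (hc : ∀ k a, c k (φ a) = a k) : IsStronglyPureMono R 𝒳 φ := by
  classical
  intro Z _ _ hZ f
  let A : ULift.{u} ℕ → Submodule R (ℕ →₀ H) := fun n => Finsupp.supported H R (Set.Iio n.down)
  have hA : ∀ i j, i ≤ j → A i ≤ A j := fun i j h =>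
    Finsupp.supported_mono (Set.Iio_subset_Iio h)
  let fA : ∀ i j, i ≤ j → A i →ₗ[R] A j := fun i j h => Submodule.inclusion (hA i j h)
  let fB : ∀ i j : ULift.{u} ℕ, i ≤ j → X →ₗ[R] X := fun i j h => LinearMap.id
  haveI : DirectedSystem (fun i => A i) fun i j h => fA i j h :=
    ⟨fun i x => rfl, fun _ _ _ _ _ _ => rfl⟩
  haveI : DirectedSystem (fun _ : ULift.{u} ℕ => X) fun i j h => fB i j h :=
    ⟨fun i x => rfl, fun _ _ _ _ _ _ => rfl⟩
  have split : ∀ i, ∃ p : X →ₗ[R] A i, p ∘ₗ (φ ∘ₗ (A i).subtype) = LinearMap.id := by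
    intro i
    refine ⟨LinearMap.codRestrict (A i)
      (∑ k ∈ Finset.range i.down, Finsupp.lsingle k ∘ₗ c k) ?_, ?_⟩
    · intro x
      rw [LinearMap.sum_apply]
      refine Submodule.sum_mem _ fun k hk => ?_
      exact Finsupp.single_mem_supported R _ (by simpa using hk)
    · apply LinearMap.ext
      rintro ⟨a, ha⟩
      ext m
      have ha' : ∀ m, ¬ m < i.down → a m = 0 := fun m hm => by
        by_contra h0
        exact hm ((Finsupp.mem_supported R a).1 ha (by simpa using h0))
      simp only [LinearMap.comp_apply, LinearMap.codRestrict_apply, LinearMap.sum_apply,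
        Submodule.subtype_apply, hc, Finsupp.lsingle_apply, LinearMap.id_apply,
        Finsupp.finset_sum_apply, Finsupp.single_apply]
      rw [Finset.sum_ite_eq']
      split_ifs with h
      · rfl
      · exact (ha' m (by simpa using h)).symm
  have hpure := hX (ULift.{u} ℕ) (fun i => A i) (fun _ => X) fA fB
    (fun i => by
      obtain ⟨p, hp⟩ := split i
      refine ⟨1, LinearMap.pi (fun _ => φ ∘ₗ (A i).subtype), p ∘ₗ LinearMap.proj 0, ?_⟩
      rw [← hp]; rfl)
    (fun i => ⟨1, LinearMap.pi (fun _ => LinearMap.id), LinearMap.proj 0, rfl⟩)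
    (fun i => φ ∘ₗ (A i).subtype) (fun _ _ _ => rfl) split
  obtain ⟨g, hg⟩ := hpure Z hZ (Module.DirectLimit.lift R _ (fun i => A i) fA
    (fun i => f ∘ₗ (A i).subtype) (fun _ _ _ _ => rfl))
  refine ⟨g ∘ₗ Module.DirectLimit.of R _ (fun _ => X) fB ⟨0⟩, ?_⟩
  refine Finsupp.lhom_ext fun n h => ?_
  have hm : Finsupp.single n h ∈ A ⟨n + 1⟩ :=
    Finsupp.single_mem_supported R _ (by simp)
  have key := LinearMap.congr_fun hg
    (Module.DirectLimit.of R _ (fun i => A i) fA ⟨n + 1⟩ ⟨_, hm⟩)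
  have k1 : Module.DirectLimit.map (fun i => φ ∘ₗ (A i).subtype) (fun _ _ _ => rfl)
      (Module.DirectLimit.of R _ (fun i => A i) fA ⟨n + 1⟩ ⟨_, hm⟩) =
      Module.DirectLimit.of R _ (fun _ => X) fB ⟨n + 1⟩ (φ (Finsupp.single n h)) :=
    Module.DirectLimit.map_apply_of _ _ _
  have k2 : Module.DirectLimit.lift R _ (fun i => A i) fA
      (fun i => f ∘ₗ (A i).subtype) (fun _ _ _ _ => rfl)
      (Module.DirectLimit.of R _ (fun i => A i) fA ⟨n + 1⟩ ⟨_, hm⟩) = f (Finsupp.single n h) :=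
    Module.DirectLimit.lift_of _ _ _
  have k3 : Module.DirectLimit.of R _ (fun _ => X) fB ⟨n + 1⟩ (φ (Finsupp.single n h)) =
      Module.DirectLimit.of R _ (fun _ => X) fB ⟨0⟩ (φ (Finsupp.single n h)) :=
    Module.DirectLimit.of_f (G := fun _ : ULift.{u} ℕ => X) (f := fB)
      (i := ⟨0⟩) (j := ⟨n + 1⟩) (hij := Nat.zero_le _)
  exact ((congrArg g (k1.trans k3)).symm.trans key).trans k2

/-- **Theorem 2.4.** Let `X ∈ 𝒳` be `𝒳`-strongly purely closed and let `Y ∈ 𝒳` be an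
`𝒳`-strongly pure submodule of `X`. If there is an `𝒳`-strongly pure monomorphism
`u : X → Y`, then `X ≅ Y`. -/
theorem stmt4 (𝒳 : ModClass R) (hiso : ClosedUnderIsos R 𝒳)
    (hsum : ClosedUnderSummands R 𝒳) (henv : HasMonoEnvelopes R 𝒳)
    (X : Type u) [AddCommGroup X] [Module R X] (hX𝒳 : 𝒳 X)
    (hXclosed : IsStronglyPurelyClosed R 𝒳 X)
    (Y : Submodule R X) (hY𝒳 : 𝒳 Y)
    (hYpure : IsStronglyPureMono R 𝒳 Y.subtype)
    (u : X →ₗ[R] Y) (hu : IsStronglyPureMono R 𝒳 u) :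
    Nonempty (X ≃ₗ[R] Y) := by
  obtain ⟨r, hr⟩ := hYpure Y hY𝒳 LinearMap.id
  obtain ⟨s, hs⟩ := hu X hX𝒳 LinearMap.id
  have hr' : ∀ y : Y, r y = y := fun y => LinearMap.congr_fun hr y
  have hs' : ∀ x, s (u x) = x := fun x => LinearMap.congr_fun hs x
  let θ := splitEquiv R r Y.subtype hr'
  let π : X →ₗ[R] LinearMap.ker r := LinearMap.fst R _ _ ∘ₗ θ.toLinearMap
  have hπY : ∀ y : Y, π y = 0 := fun y => by
    apply Subtype.ext
    simp [π, θ, splitEquiv, hr']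
  have hπH : ∀ h : LinearMap.ker r, π h = h := fun h => by
    apply Subtype.ext
    have : r h = 0 := h.2
    simp [π, θ, splitEquiv, this]
  let w : Module.End R X := Y.subtype ∘ₗ u
  let t : Module.End R X := s ∘ₗ r
  have htw : ∀ x, t (w x) = x := fun x => by simp [t, w, hr', hs']
  have hpow : ∀ n x, (t ^ n) ((w ^ n) x) = x := by
    intro n
    induction n with
    | zero => intro x; rfl
    | succ n ih =>
      intro x
      rw [pow_succ t, pow_succ' w, Module.End.mul_apply, Module.End.mul_apply, htw, ih]
  have htH : ∀ h : LinearMap.ker r, t h = 0 := fun h => by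
    have : r h = 0 := h.2
    simp [t, this]
  have hπw : ∀ x, π (w x) = 0 := fun x => hπY (u x)
  let φ' : (ℕ →₀ LinearMap.ker r) →ₗ[R] Y :=
    Finsupp.lsum ℕ fun n => u ∘ₗ (w ^ n) ∘ₗ (LinearMap.ker r).subtype
  have hφ : IsStronglyPureMono R 𝒳 (Y.subtype ∘ₗ φ') := by
    refine pure_of_coords R 𝒳 hXclosed _ (fun k => π ∘ₗ (t ^ (k + 1))) fun k a => ?_
    suffices h : (π ∘ₗ (t ^ (k + 1))) ∘ₗ (Y.subtype ∘ₗ φ') = Finsupp.lapply k from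
      LinearMap.congr_fun h a
    refine Finsupp.lhom_ext fun n h => ?_
    have e1 : (Y.subtype ∘ₗ φ') (Finsupp.single n h) = (w ^ (n + 1)) (h : X) := by
      rw [pow_succ', Module.End.mul_apply]
      simp [φ', w]
    rw [LinearMap.comp_apply, e1, LinearMap.comp_apply, Finsupp.lapply_apply]
    rcases lt_trichotomy n k with hlt | rfl | hlt
    · obtain ⟨d, rfl⟩ := Nat.exists_eq_add_of_lt hlt
      rw [show n + d + 1 + 1 = d + 1 + (n + 1) by ring, pow_add t, Module.End.mul_apply, hpow,
        pow_succ t d, Module.End.mul_apply, htH, Finsupp.single_eq_of_ne (by omega)]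
      simp
    · rw [hpow, hπH]; simp
    · obtain ⟨d, rfl⟩ := Nat.exists_eq_add_of_lt hlt
      rw [show k + d + 1 + 1 = k + 1 + (d + 1) by ring, pow_add w, Module.End.mul_apply, hpow,
        pow_succ' w d, Module.End.mul_apply, hπw, Finsupp.single_eq_of_ne (by omega)]
  obtain ⟨E, _, _, e, -, he⟩ := henv (ℕ →₀ LinearMap.ker r)
  obtain ⟨p0, hp0⟩ := hφ E he.1.1 e
  obtain ⟨q, hq⟩ := he.1.2 Y hY𝒳 φ'
  have hbij := he.2 (p0 ∘ₗ Y.subtype ∘ₗ q) (by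
    rw [LinearMap.comp_assoc, LinearMap.comp_assoc, hq, hp0])
  let α := LinearEquiv.ofBijective _ hbij
  let p : Y →ₗ[R] E := α.symm.toLinearMap ∘ₗ p0 ∘ₗ Y.subtype
  have hpq : ∀ x, p (q x) = x := fun x => α.symm_apply_apply x
  let ψ := splitEquiv R p q hpq
  have hHE : 𝒳 (LinearMap.ker r × E) := by
    refine hsum _ X ⟨θ.symm.toLinearMap ∘ₗ LinearMap.prodMap LinearMap.id q,
      LinearMap.prodMap LinearMap.id p ∘ₗ θ.toLinearMap, ?_⟩ hX𝒳
    apply LinearMap.ext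
    rintro ⟨x, y⟩
    simp [hpq]
  let σ : (ℕ →₀ LinearMap.ker r) ≃ₗ[R] (LinearMap.ker r × (ℕ →₀ LinearMap.ker r)) :=
    (Finsupp.domLCongr Equiv.natSumPUnitEquivNat.{0}.symm).trans
      ((Finsupp.sumFinsuppLEquivProdFinsupp R).trans
        ((LinearEquiv.prodComm R _ _).trans
          (LinearEquiv.prodCongr (Finsupp.LinearEquiv.finsuppUnique R _ PUnit)
            (LinearEquiv.refl R _))))
  have henv2 := envelope_prod R 𝒳 (H := LinearMap.ker r) e he hHE
  have henv3 : IsEnvelope R 𝒳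
      (LinearMap.prodMap (LinearMap.id : LinearMap.ker r →ₗ[R] LinearMap.ker r) e ∘ₗ
        σ.toLinearMap) := by
    refine ⟨⟨hHE, fun Z _ _ hZ g => ?_⟩, fun h hh => ?_⟩
    · obtain ⟨k, hk⟩ := henv2.1.2 Z hZ (g ∘ₗ σ.symm.toLinearMap)
      refine ⟨k, ?_⟩
      rw [← LinearMap.comp_assoc, hk]
      ext; simp
    · refine henv2.2 h ?_
      apply LinearMap.ext
      intro z
      have := LinearMap.congr_fun hh (σ.symm z)
      simpa using this
  obtain ⟨β⟩ := envelope_unique R 𝒳 _ _ henv3 he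
  exact ⟨θ.trans <| (LinearEquiv.prodCongr (LinearEquiv.refl R _)
      (ψ.trans (LinearEquiv.prodComm R _ _))).trans <|
    (LinearEquiv.prodAssoc R _ _ _).symm.trans <|
    (LinearEquiv.prodCongr β (LinearEquiv.refl R _)).trans <|
    (LinearEquiv.prodComm R _ _).trans ψ.symm⟩
end

section
/- Let R be a ring, let E be an injective right R-module and let E′ be an injective submodule of E. If there exists an injective R-linear map u : E → E′, then E ≅ E′. -/
/-!
Bumby's theorem (Corollary 2.5(1)): "right R-modules" are formalized as Lean `Module R`
modules (the theory is side-symmetric).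
-/

universe u

variable (R : Type u) [Ring R]

/-- `E` is an injective `R`-module: for every injective `R`-linear map `i : A → B`, every
`R`-linear map `A → E` extends to an `R`-linear map `B → E`. -/
def IsInjectiveModule (E : Type u) [AddCommGroup E] [Module R E] : Prop :=
  ∀ (A B : Type u) [AddCommGroup A] [Module R A] [AddCommGroup B] [Module R B]
    (i : A →ₗ[R] B), Function.Injective i →
    ∀ f : A →ₗ[R] E, ∃ g : B →ₗ[R] E, g ∘ₗ i = f

/-- Every submodule of an injective module is essential in a direct summand. -/
theorem exists_hull_proj (M : Type u) [AddCommGroup M] [Module R M] (hM : IsInjectiveModule R M)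
    (T : Submodule R M) :
    ∃ p : M →ₗ[R] M, (∀ x, p (p x) = p x) ∧ (∀ t ∈ T, p t = t) ∧
      ∀ X : Submodule R M, X ≤ LinearMap.range p → (∀ x ∈ X, x ∈ T → x = 0) →
        ∀ x ∈ X, x = 0 := by
  have zorn : ∀ (A B : Submodule R M), Disjoint A B → ∃ K, A ≤ K ∧ Disjoint K B ∧
      ∀ Y, K ≤ Y → Disjoint Y B → Y = K := by
    intro A B hAB
    obtain ⟨K, hAK, hK⟩ := zorn_le_nonempty₀ {K : Submodule R M | Disjoint K B} (by
      intro c hc hchain y hy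
      refine ⟨sSup c, ?_, fun z hz => le_sSup hz⟩
      rw [Set.mem_setOf_eq, Submodule.disjoint_def]
      intro x hx hxB
      rw [Submodule.mem_sSup_of_directed ⟨y, hy⟩ hchain.directedOn] at hx
      obtain ⟨Y, hY, hxY⟩ := hx
      exact Submodule.disjoint_def.1 (hc hY) x hxY hxB) A hAB
    exact ⟨K, hAK, hK.prop, fun Y hKY hY => (hK.eq_of_le hY hKY).symm⟩
  obtain ⟨K, -, hKT, hKmax⟩ := zorn ⊥ T disjoint_bot_left
  obtain ⟨H, hTH, hHK, hHmax⟩ := zorn T K hKT.symm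
  rw [Submodule.disjoint_def] at hKT
  have hHK' := Submodule.disjoint_def.1 hHK
  -- the map H × K → M
  obtain ⟨p, hp⟩ := hM (H × K) M (H.subtype.coprod K.subtype) (by
    rw [← LinearMap.ker_eq_bot, LinearMap.ker_eq_bot']
    rintro ⟨⟨h, hh⟩, ⟨k, hk⟩⟩ e
    simp only [LinearMap.coprod_apply, Submodule.subtype_apply] at e
    have h1 : h = -k := eq_neg_of_add_eq_zero_left e
    have h2 : h = 0 := hHK' h hh (h1 ▸ K.neg_mem hk)
    have h3 : k = 0 := by simpa [h2] using e
    simp [h2, h3]) (H.subtype ∘ₗ LinearMap.fst R H K)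
  have pH : ∀ h ∈ H, p h = h := fun h hh => by
    simpa using LinearMap.congr_fun hp (⟨h, hh⟩, 0)
  have pK : ∀ k ∈ K, p k = 0 := fun k hk => by
    simpa using LinearMap.congr_fun hp (0, ⟨k, hk⟩)
  have hc : K.comap p = K := by
    refine hKmax _ (fun k hk => ?_) ?_
    · simp [pK k hk]
    · rw [Submodule.disjoint_def]
      intro x hx hxT
      rw [Submodule.mem_comap, pH x (hTH hxT)] at hx
      exact hKT x hx hxT
  have hr : LinearMap.range p = H := by
    refine hHmax _ (fun h hh => ⟨h, pH h hh⟩) ?_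
    rw [Submodule.disjoint_def]
    rintro _ ⟨x, rfl⟩ hx
    exact pK x (hc ▸ hx)
  refine ⟨p, fun x => pH _ (hr ▸ ⟨x, rfl⟩), fun t ht => pH t (hTH ht), ?_⟩
  intro X hX hXT x hx
  rw [hr] at hX
  have : K ⊔ X = K := by
    refine hKmax _ le_sup_left ?_
    rw [Submodule.disjoint_def]
    intro t ht htT
    obtain ⟨k, hk, y, hy, rfl⟩ := Submodule.mem_sup.1 ht
    have hk0 : k = 0 := by
      refine hHK' k ?_ hk
      have := H.sub_mem (hTH htT) (hX hy)
      simpa using this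
    subst hk0
    rw [zero_add] at htT ⊢
    exact hXT y hy htT
  exact hHK' x (hX hx) (this ▸ Submodule.mem_sup_right hx)

/-- If `E` is injective, `E'` is an injective submodule of `E`, and there is an injective
`R`-linear map `u : E → E'`, then `E ≅ E'`. -/
theorem stmt5 (E : Type u) [AddCommGroup E] [Module R E] (hE : IsInjectiveModule R E)
    (E' : Submodule R E) (hE' : IsInjectiveModule R E')
    (u : E →ₗ[R] E') (hu : Function.Injective u) :
    Nonempty (E ≃ₗ[R] E') := by
  obtain ⟨q, hq⟩ := hE' E' E E'.subtype E'.subtype_injective LinearMap.id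
  have qE : ∀ y : E', q y = y := fun y => LinearMap.congr_fun hq y
  let F : Submodule R E →o Submodule R E :=
    ⟨fun X => LinearMap.ker q ⊔ (X.map u).map E'.subtype, fun X Y h =>
      sup_le_sup_left (Submodule.map_mono (Submodule.map_mono h)) _⟩
  let S : Submodule R E := OrderHom.lfp F
  have hS : LinearMap.ker q ⊔ (S.map u).map E'.subtype = S := OrderHom.map_lfp F
  let T : Submodule R E' := S.map u
  have hCS : ∀ c, q c = 0 → c ∈ S := fun c hc => by
    rw [← hS]; exact Submodule.mem_sup_left hc
  have hTS : ∀ t ∈ T, (t : E) ∈ S := fun t ht => by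
    rw [← hS]; exact Submodule.mem_sup_right ⟨t, ht, rfl⟩
  have hqS : ∀ s ∈ S, q s ∈ T := fun s hs => by
    rw [← hS] at hs
    obtain ⟨c, hc, _, ⟨t, ht, rfl⟩, rfl⟩ := Submodule.mem_sup.1 hs
    rw [LinearMap.mem_ker] at hc
    rw [map_add, hc, zero_add, Submodule.subtype_apply, qE]
    exact ht
  have hqS' : ∀ x, q x ∈ T → x ∈ S := fun x hx => by
    have h1 := hCS (x - q x) (by rw [map_sub, qE, sub_self])
    have h2 := S.add_mem h1 (hTS _ hx)
    simpa using h2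
  obtain ⟨p, pp, pT, pess⟩ := exists_hull_proj R E' hE' T
  have puS : ∀ s ∈ S, p (u s) = u s := fun s hs => pT _ ⟨s, hs, rfl⟩
  let a : E →ₗ[R] E := LinearMap.id - E'.subtype ∘ₗ q + E'.subtype ∘ₗ p ∘ₗ q
  have ha : ∀ x, a x = x - q x + p (q x) := fun x => rfl
  let φ : E →ₗ[R] E' := p ∘ₗ u ∘ₗ a + (q - p ∘ₗ q)
  have hφ : ∀ x, φ x = p (u (a x)) + (q x - p (q x)) := fun x => rfl
  have qa : ∀ x, q (a x) = p (q x) := fun x => by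
    rw [ha, map_add, map_sub, qE, qE, sub_self, zero_add]
  -- injectivity of `p ∘ u` on the range of `a`
  have key : ∀ x, p (u (a x)) = 0 → a x = 0 := by
    let X : Submodule R E := LinearMap.range a ⊓ LinearMap.ker (p ∘ₗ u)
    have hXS : ∀ x ∈ X, x ∈ S → x = 0 := by
      rintro x ⟨-, hx⟩ hxS
      have hx' : p (u x) = 0 := hx
      rw [puS x hxS] at hx'
      exact hu (by rw [hx', map_zero])
    have h0 := pess (X.map q) (by
      rintro _ ⟨_, ⟨⟨x, rfl⟩, -⟩, rfl⟩
      exact ⟨q x, (qa x).symm⟩) (by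
      rintro _ ⟨x, hx, rfl⟩ hT
      rw [hXS x hx (hqS' x hT), map_zero])
    intro x hx
    have hxX : a x ∈ X := ⟨⟨x, rfl⟩, hx⟩
    exact hXS _ hxX (hCS _ (h0 _ ⟨a x, hxX, rfl⟩))
  have φinj : Function.Injective φ := by
    rw [← LinearMap.ker_eq_bot, LinearMap.ker_eq_bot']
    intro x hx
    have h1 : p (φ x) = 0 := by rw [hx, map_zero]
    rw [hφ, map_add, pp, map_sub, pp, sub_self, add_zero] at h1
    rw [hφ, h1, zero_add] at hx
    have h2 := key x h1
    rw [ha, ← sub_eq_zero.1 hx] at h2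
    simpa using h2
  have kerφ : ∀ k, p k = 0 → φ k = k := fun k hk => by
    rw [hφ, ha, qE, hk]; simp
  have φS : ∀ s ∈ S, φ s = u s := fun s hs => by
    rw [hφ, ha, pT _ (hqS s hs), sub_self, add_zero, sub_add_cancel, puS s hs]
  obtain ⟨g, hg⟩ := hE E E' φ φinj LinearMap.id
  have gφ : ∀ x, g (φ x) = x := fun x => LinearMap.congr_fun hg x
  have hker : ∀ z, g z = 0 → z ∈ LinearMap.range φ → z = 0 := by
    rintro _ hz ⟨x, rfl⟩
    rw [gφ] at hz
    rw [hz, map_zero]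
  have gker : ∀ z, g z = 0 → z = 0 := by
    have h0 := pess ((LinearMap.ker g).map p) (by
      rintro _ ⟨x, -, rfl⟩
      exact ⟨x, rfl⟩) (by
      rintro _ ⟨z, hz, rfl⟩ hT
      have : z ∈ LinearMap.range φ := by
        obtain ⟨s, hs, hsz⟩ := hT
        refine ⟨s + ((z - p z : E') : E), ?_⟩
        rw [map_add, φS s hs, hsz, kerφ _ (by rw [map_sub, pp, sub_self])]
        abel
      rw [hker z hz this, map_zero])
    intro z hz
    exact hker z hz ⟨z, kerφ z (h0 _ ⟨z, hz, rfl⟩)⟩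
  refine ⟨LinearEquiv.ofBijective φ ⟨φinj, fun y => ⟨g y, ?_⟩⟩⟩
  have := gker (y - φ (g y)) (by rw [map_sub, gφ, sub_self])
  exact (sub_eq_zero.1 this).symm
end

section
/- Let R be a ring, let E be a pure-injective right R-module and let E′ be a pure-injective pure submodule of E. If there exists a pure monomorphism u : E → E′, then E ≅ E′. -/
/-!
Corollary 2.5(2). "Right R-modules" are formalized as Lean `Module R` modules
(the theory is side-symmetric).
-/

universe u

variable (R : Type u) [Ring R]

/-- `f : A → B` is a pure monomorphism. We use the standard equational criterion
(solvability of finite linear systems descends from `B` to `A`), which for arbitrary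
(possibly noncommutative) rings is equivalent to injectivity of `f ⊗ 1_C` for all
modules `C` on the other side. -/
def IsPureMono {A B : Type u} [AddCommGroup A] [Module R A] [AddCommGroup B] [Module R B]
    (f : A →ₗ[R] B) : Prop :=
  Function.Injective f ∧
    ∀ (m n : ℕ) (r : Fin m → Fin n → R) (a : Fin m → A),
      (∃ y : Fin n → B, ∀ i, ∑ j, r i j • y j = f (a i)) →
      ∃ x : Fin n → A, ∀ i, ∑ j, r i j • x j = a i

/-- `E` is pure-injective: for every pure monomorphism `i : A → B`, every homomorphism
`A → E` extends to a homomorphism `B → E`. -/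
def IsPureInjective (E : Type u) [AddCommGroup E] [Module R E] : Prop :=
  ∀ (A B : Type u) [AddCommGroup A] [Module R A] [AddCommGroup B] [Module R B]
    (i : A →ₗ[R] B), IsPureMono R i → ∀ f : A →ₗ[R] E, ∃ g : B →ₗ[R] E, g ∘ₗ i = f

open Filter in
/-- A pure-injective module has generalized limits along any proper filter. -/
theorem exists_lim_filter {M I : Type u} [AddCommGroup M] [Module R M]
    (hM : IsPureInjective R M) (l : Filter I) [l.NeBot] :
    ∃ L : (I → M) →ₗ[R] M, (∀ x y : I → M, (∀ᶠ i in l, x i = y i) → L x = L y) ∧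
      ∀ m : M, L (fun _ => m) = m := by
  let N : Submodule R (I → M) :=
    { carrier := {x | ∀ᶠ i in l, x i = 0}
      add_mem' := by
        intro a b ha hb
        filter_upwards [ha, hb] with i h1 h2
        simp [h1, h2]
      zero_mem' := by simp
      smul_mem' := by
        intro c x hx
        filter_upwards [hx] with i h1
        simp [h1] }
  have hN : ∀ x : I → M, x ∈ N ↔ ∀ᶠ i in l, x i = 0 := fun x => Iff.rfl
  let d : M →ₗ[R] (I → M) := LinearMap.pi (fun _ => LinearMap.id)
  have hd : IsPureMono R (N.mkQ ∘ₗ d) := by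
    constructor
    · rw [← LinearMap.ker_eq_bot, LinearMap.ker_eq_bot']
      intro m hm
      have h1 : d m ∈ N := by simpa using hm
      obtain ⟨i, hi⟩ := ((hN _).1 h1).exists
      simpa [d] using hi
    · intro m n r a ⟨y, hy⟩
      choose Y hY using fun j => N.mkQ_surjective (y j)
      have h1 : ∀ i, ∀ᶠ k in l, ∑ j, r i j • Y j k = a i := by
        intro i
        have h2 : (∑ j, r i j • Y j) - d (a i) ∈ N := by
          rw [← Submodule.ker_mkQ N, LinearMap.mem_ker, map_sub, map_sum]
          have := hy i
          simp only [map_smul, hY]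
          rw [this]
          simp
        filter_upwards [(hN _).1 h2] with k hk
        simpa [d, sub_eq_zero] using hk
      obtain ⟨k, hk⟩ := (eventually_all.2 h1).exists
      exact ⟨fun j => Y j k, hk⟩
  obtain ⟨g, hg⟩ := hM _ _ _ hd LinearMap.id
  refine ⟨g ∘ₗ N.mkQ, ?_, ?_⟩
  · intro x y h
    have : x - y ∈ N := by
      rw [hN]
      filter_upwards [h] with i hi
      simp [hi]
    rw [← sub_eq_zero, ← map_sub, LinearMap.comp_apply,
      (Submodule.Quotient.mk_eq_zero N).2 this |> fun h => (show N.mkQ (x - y) = 0 from h), map_zero]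
  · intro m
    exact LinearMap.congr_fun hg m

open Filter in
theorem exists_lim_chain {M I : Type u} [AddCommGroup M] [Module R M]
    (hM : IsPureInjective R M) (r : I → I → Prop) (hrefl : ∀ a, r a a)
    (htrans : ∀ {a b c}, r a b → r b c → r a c) (c : Set I) (hc : IsChain r c)
    (hne : c.Nonempty) :
    ∃ L : (c → M) →ₗ[R] M,
      (∀ i : c, ∀ x y : c → M, (∀ j : c, r i j → x j = y j) → L x = L y) ∧
      ∀ m : M, L (fun _ => m) = m := by
  haveI : Nonempty c := hne.to_subtype
  let l : Filter c := ⨅ i : c, 𝓟 {j : c | r i j}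
  haveI : l.NeBot := by
    refine iInf_neBot_of_directed ?_ ?_
    · intro i j
      haveI : Std.Refl r := ⟨hrefl⟩
      rcases hc.total i.2 j.2 with h | h
      · exact ⟨j, by
          simp only [ge_iff_le, le_principal_iff, mem_principal]
          exact fun k hk => htrans h hk, le_rfl⟩
      · exact ⟨i, le_rfl, by
          simp only [ge_iff_le, le_principal_iff, mem_principal]
          exact fun k hk => htrans h hk⟩
    · intro i
      rw [principal_neBot_iff]
      exact ⟨i, hrefl _⟩
  obtain ⟨L, h1, h2⟩ := exists_lim_filter R hM l
  refine ⟨L, fun i x y h => h1 x y ?_, h2⟩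
  have : {j : c | r i j} ∈ l := mem_iInf_of_mem i (mem_principal_self _)
  filter_upwards [this] with j hj using h j hj

/-- Existence of a hull of a subset `Q` of a pure-injective module, as an idempotent. -/
theorem exists_hull {M : Type u} [AddCommGroup M] [Module R M]
    (hM : IsPureInjective R M) (Q : Set M) :
    ∃ e : M →ₗ[R] M, (∀ x, e (e x) = e x) ∧ (∀ x ∈ Q, e x = x) ∧
      ∀ g : M →ₗ[R] M, (∀ x ∈ Q, g x = x) →
        ∃ h : M →ₗ[R] M, (∀ x ∈ Q, h x = x) ∧ ∀ x, h (g (e x)) = e x := by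
  classical
  let S := {f : M →ₗ[R] M // ∀ x ∈ Q, f x = x}
  let comp : S → S → S := fun g f => ⟨g.1 ∘ₗ f.1, fun x hx => by
    rw [LinearMap.comp_apply, f.2 x hx, g.2 x hx]⟩
  let one : S := ⟨LinearMap.id, fun x _ => rfl⟩
  let r : S → S → Prop := fun f g => ∃ h : S, ∀ x, g.1 x = h.1 (f.1 x)
  have hrefl : ∀ a, r a a := fun a => ⟨one, fun x => rfl⟩
  have htrans : ∀ {a b c}, r a b → r b c → r a c := by
    rintro a b c ⟨h, hh⟩ ⟨k, hk⟩
    exact ⟨comp k h, fun x => by rw [hk, hh]; rfl⟩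
  obtain ⟨f, hf⟩ : ∃ f : S, ∀ g, r f g → r g f := by
    refine exists_maximal_of_chains_bounded ?_ htrans
    intro c hc
    rcases c.eq_empty_or_nonempty with rfl | hne
    · exact ⟨one, by simp⟩
    obtain ⟨L, hL1, hL2⟩ := exists_lim_chain R hM r hrefl htrans c hc hne
    let lim : (c → S) → S := fun F => ⟨L ∘ₗ LinearMap.pi (fun i => (F i).1), fun x hx => by
      have : (LinearMap.pi (fun i => (F i).1)) x = fun _ : c => x := by
        ext i; exact (F i).2 x hx
      rw [LinearMap.comp_apply, this, hL2]⟩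
    refine ⟨lim (fun i => i.1), fun a ha => ?_⟩
    let H : c → S := fun j => if h : r a j.1 then h.choose else one
    refine ⟨lim H, fun x => hL1 ⟨a, ha⟩ _ _ ?_⟩
    intro j hj
    have hj' : r a j.1 := hj
    have : H j = hj'.choose := dif_pos hj'
    simp only [LinearMap.pi_apply, this]
    exact hj'.choose_spec x
  let S' := {e : S // r f e}
  let r' : S' → S' → Prop := fun a b => ∀ x, a.1.1 x = x → b.1.1 x = x
  have hrefl' : ∀ a, r' a a := fun a x h => h
  have htrans' : ∀ {a b c}, r' a b → r' b c → r' a c := fun h1 h2 x hx => h2 x (h1 x hx)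
  obtain ⟨e, he⟩ : ∃ f : S', ∀ g, r' f g → r' g f := by
    refine exists_maximal_of_chains_bounded ?_ htrans'
    intro c hc
    rcases c.eq_empty_or_nonempty with rfl | hne
    · exact ⟨⟨f, hrefl f⟩, by simp⟩
    obtain ⟨L, hL1, hL2⟩ := exists_lim_chain R hM r' hrefl' htrans' c hc hne
    let lim : (c → S) → S := fun F => ⟨L ∘ₗ LinearMap.pi (fun i => (F i).1), fun x hx => by
      have : (LinearMap.pi (fun i => (F i).1)) x = fun _ : c => x := by
        ext i; exact (F i).2 x hx
      rw [LinearMap.comp_apply, this, hL2]⟩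
    choose H hH using fun j : c => j.1.2
    refine ⟨⟨lim (fun i => i.1.1), lim H, fun x => ?_⟩, fun a ha x hx => ?_⟩
    · change L _ = L _
      congr 1
      ext j
      exact hH j x
    · change L _ = x
      conv_rhs => rw [← hL2 x]
      refine hL1 ⟨a, ha⟩ _ _ ?_
      intro j hj
      exact hj x hx
  have key : ∀ g : S, ∃ h : S, ∀ x, h.1 (g.1 (e.1.1 x)) = e.1.1 x := by
    intro g
    have h1 : r e.1 (comp g e.1) := ⟨g, fun x => rfl⟩
    obtain ⟨h, hh⟩ := htrans (hf _ (htrans e.2 h1)) e.2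
    exact ⟨h, fun x => (hh x).symm⟩
  refine ⟨e.1.1, ?_, e.1.2, fun g hg => ?_⟩
  · obtain ⟨h, hh⟩ := key e.1
    let e' : S' := ⟨comp h e.1, htrans e.2 ⟨h, fun x => rfl⟩⟩
    have h1 : r' e e' := by
      intro x hx
      change h.1 (e.1.1 x) = x
      have := hh x
      rwa [hx] at this
    intro x
    exact he e' h1 _ (hh x)
  · obtain ⟨h, hh⟩ := key ⟨g, hg⟩
    exact ⟨h.1, h.2, hh⟩

/-- Splitting off the kernel of a retraction. -/
theorem split_equiv {A B : Type u} [AddCommGroup A] [Module R A] [AddCommGroup B] [Module R B]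
    (i : B →ₗ[R] A) (q : A →ₗ[R] B) (h : ∀ x, q (i x) = x) :
    Nonempty (A ≃ₗ[R] (LinearMap.ker q × B)) := by
  refine ⟨(LinearEquiv.ofBijective ((LinearMap.ker q).subtype.coprod i) ⟨?_, ?_⟩).symm⟩
  · rw [← LinearMap.ker_eq_bot, LinearMap.ker_eq_bot']
    rintro ⟨c, b⟩ hcb
    have h0 : (c : A) + i b = 0 := by simpa using hcb
    have h1 : q (c + i b) = 0 := by rw [h0, map_zero]
    have hb : b = 0 := by
      rw [map_add, h, LinearMap.mem_ker.1 c.2, zero_add] at h1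
      exact h1
    subst hb
    have hc : c = 0 := by
      ext
      simpa using h0
    rw [hc]; rfl
  · intro x
    refine ⟨(⟨x - i (q x), by simp [h]⟩, q x), by simp⟩

/-- If `E` is pure-injective, `E'` is a pure-injective pure submodule of `E`, and there is
a pure monomorphism `u : E → E'`, then `E ≅ E'`. -/
theorem stmt6 (E : Type u) [AddCommGroup E] [Module R E] (hE : IsPureInjective R E)
    (E' : Submodule R E) (hE'pi : IsPureInjective R E') (hE'pure : IsPureMono R E'.subtype)
    (u : E →ₗ[R] E') (hu : IsPureMono R u) :
    Nonempty (E ≃ₗ[R] E') := by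
  obtain ⟨q, hq'⟩ := hE'pi _ _ _ hE'pure LinearMap.id
  have hq : ∀ x : E', q (x : E) = x := fun x => LinearMap.congr_fun hq' x
  obtain ⟨v, hv'⟩ := hE _ _ _ hu LinearMap.id
  have hv : ∀ x, v (u x) = x := fun x => LinearMap.congr_fun hv' x
  let Q : Set E' := {x | ∃ (n : ℕ) (c : E), q c = 0 ∧ x = (fun y : E' => u (y : E))^[n] (u c)}
  have hQ0 : ∀ c, q c = 0 → u c ∈ Q := fun c hc => ⟨0, c, hc, rfl⟩
  have hQs : ∀ x ∈ Q, u (x : E) ∈ Q := by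
    rintro x ⟨n, c, hc, rfl⟩
    exact ⟨n + 1, c, hc, by rw [Function.iterate_succ_apply']⟩
  have hQc : ∀ x ∈ Q, (∃ c, q c = 0 ∧ x = u c) ∨ ∃ y ∈ Q, x = u (y : E) := by
    rintro x ⟨n, c, hc, rfl⟩
    cases n with
    | zero => exact Or.inl ⟨c, hc, rfl⟩
    | succ n => exact Or.inr ⟨_, ⟨n, c, hc, rfl⟩, by rw [Function.iterate_succ_apply']⟩
  obtain ⟨e, hee, heQ, hmin⟩ := exists_hull R hE'pi Q
  let X := LinearMap.range e
  have heX : ∀ x : X, e x = x := by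
    rintro ⟨_, y, rfl⟩
    exact hee y
  let p : E' →ₗ[R] X := e.rangeRestrict
  have hp : ∀ x : X, p x = x := fun x => Subtype.ext (heX x)
  have hpe : ∀ y, ((p y : X) : E') = e y := fun y => rfl
  have hQX : ∀ x ∈ Q, ((p x : X) : E') = x := heQ
  -- endomorphisms of `X` over `Q` are split injective, over `Q`
  have hleft : ∀ g : X →ₗ[R] X, (∀ x ∈ Q, g (p x) = p x) →
      ∃ k : X →ₗ[R] X, (∀ x ∈ Q, k (p x) = p x) ∧ ∀ x, k (g x) = x := by
    intro g hg
    obtain ⟨h, hhQ, hh⟩ := hmin (X.subtype ∘ₗ g ∘ₗ p) (fun x hx => by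
      simp only [LinearMap.comp_apply, hg x hx]
      exact heQ x hx)
    refine ⟨p ∘ₗ h ∘ₗ X.subtype, fun x hx => ?_, fun x => ?_⟩
    · simp only [LinearMap.comp_apply, Submodule.subtype_apply]
      rw [hQX x hx, hhQ x hx]
    · have := hh x
      rw [heX] at this
      simp only [LinearMap.comp_apply, Submodule.subtype_apply, hp] at this ⊢
      rw [this, hp]
  have hinj : ∀ g : X →ₗ[R] X, (∀ x ∈ Q, g (p x) = p x) → Function.Injective g := by
    intro g hg
    obtain ⟨k, -, hk⟩ := hleft g hg
    exact Function.LeftInverse.injective hk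
  have hsurj : ∀ g : X →ₗ[R] X, (∀ x ∈ Q, g (p x) = p x) → Function.Surjective g := by
    intro g hg
    obtain ⟨k, hkQ, hk⟩ := hleft g hg
    intro y
    exact ⟨k y, hinj k hkQ (hk _)⟩
  let C := LinearMap.ker q
  let a : C × X →ₗ[R] X := p ∘ₗ u ∘ₗ (C.subtype.coprod (E'.subtype ∘ₗ X.subtype))
  have ha : ∀ c x, a (c, x) = p (u ((c : E) + ((x : E') : E))) := fun c x => rfl
  let s : E →ₗ[R] C := LinearMap.codRestrict C (LinearMap.id - E'.subtype ∘ₗ q) (by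
    intro x
    simp [C, hq])
  have hs : ∀ x, ((s x : C) : E) = x - (q x : E) := fun x => rfl
  let b : X →ₗ[R] C × X := (s.prod (p ∘ₗ q)) ∘ₗ v ∘ₗ X.subtype
  have hb : ∀ x : X, b x = (s (v x), p (q (v x))) := fun x => rfl
  have hb0 : ∀ c : C, b (p (u c)) = (c, 0) := by
    intro c
    have hc : q c = 0 := c.2
    rw [hb, hQX _ (hQ0 _ hc), hv, hc, map_zero]
    congr 1
    ext
    rw [hs, hc]; simp
  have hb1 : ∀ y ∈ Q, b (p (u y)) = (0, p y) := by
    intro y hy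
    rw [hb, hQX _ (hQs _ hy), hv, hq]
    congr 1
    ext
    rw [hs, hq]; simp
  have hab : Function.Surjective (a ∘ₗ b) := by
    apply hsurj
    intro x hx
    rw [LinearMap.comp_apply]
    rcases hQc x hx with ⟨c, hc, rfl⟩ | ⟨y, hy, rfl⟩
    · rw [hb0 ⟨c, hc⟩, ha]
      simp
    · rw [hb1 y hy, ha, hQX y hy]
      simp
  have hα := hinj (LinearMap.snd R C X ∘ₗ (b ∘ₗ a) ∘ₗ LinearMap.inr R C X) (by
    intro x hx
    simp only [LinearMap.comp_apply, LinearMap.inr_apply, ha, hQX x hx]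
    simp [hb1 x hx])
  have hainj : Function.Injective a := by
    rw [← LinearMap.ker_eq_bot, LinearMap.ker_eq_bot']
    rintro ⟨c, x⟩ hcx
    have h1 : a (c, 0) + a (0, x) = 0 := by
      rw [← map_add]; simpa using hcx
    have h2 : b (a (c, 0)) = (c, 0) := by
      rw [ha, ← hb0 c]; simp
    have h3 : (c, 0) + b (a (0, x)) = 0 := by
      rw [← h2, ← map_add, h1, map_zero]
    have hx : x = 0 := by
      apply hα
      rw [map_zero]
      have := congrArg Prod.snd h3
      simpa using this
    subst hx
    have h4 : (c, (0 : X)) = 0 := by rw [← h2, hcx, map_zero]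
    exact h4
  have hasurj : Function.Surjective a := fun y => by
    obtain ⟨x, hx⟩ := hab y
    exact ⟨b x, hx⟩
  let A : (C × X) ≃ₗ[R] X := LinearEquiv.ofBijective a ⟨hainj, hasurj⟩
  obtain ⟨e1⟩ := split_equiv R E'.subtype q hq
  obtain ⟨e2⟩ := split_equiv R X.subtype p hp
  exact ⟨e1 ≪≫ₗ (LinearEquiv.refl R C).prodCongr (e2 ≪≫ₗ LinearEquiv.prodComm R _ _)
    ≪≫ₗ (LinearEquiv.prodAssoc R _ _ _).symm
    ≪≫ₗ A.prodCongr (LinearEquiv.refl R _) ≪≫ₗ LinearEquiv.prodComm R _ _ ≪≫ₗ e2.symm⟩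
end

section
/- Let R be a ring, let E be a flat cotorsion right R-module and let E′ be a pure submodule of E such that E′ is also flat and cotorsion. If there exists a pure monomorphism u : E → E′, then E ≅ E′. -/
/-!
Corollary 2.5(3). "Right R-modules" are formalized as Lean `Module R` modules
(the theory is side-symmetric).
-/

universe u

variable (R : Type u) [Ring R]

/-- `F` is a flat `R`-module: every surjection onto `F` has pure kernel, i.e. every short
exact sequence `0 → K → L → F → 0` is pure. (For arbitrary rings this is equivalent to the
tensor-product definition of flatness.) -/
def IsFlatModule (F : Type u) [AddCommGroup F] [Module R F] : Prop :=
  ∀ (L : Type u) [AddCommGroup L] [Module R L] (p : L →ₗ[R] F),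
    Function.Surjective p → IsPureMono R (LinearMap.ker p).subtype

/-- `M` is cotorsion, i.e. `Ext¹_R(F, M) = 0` for every flat `R`-module `F`: equivalently,
every monomorphism out of `M` with flat cokernel splits. -/
def IsCotorsionModule (M : Type u) [AddCommGroup M] [Module R M] : Prop :=
  ∀ (L : Type u) [AddCommGroup L] [Module R L] (v : M →ₗ[R] L),
    Function.Injective v → IsFlatModule R (L ⧸ LinearMap.range v) →
    ∃ p : L →ₗ[R] M, p ∘ₗ v = LinearMap.id



namespace FC
variable {R}

/-- The equational form of flatness. -/
def EqFlat (R : Type u) [Ring R] (F : Type u) [AddCommGroup F] [Module R F] : Prop :=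
  ∀ (m n : ℕ) (r : Fin m → Fin n → R) (z : Fin n → F), (∀ i, ∑ j, r i j • z j = 0) →
    ∃ (P : Type u) (_ : AddCommGroup P) (_ : Module R P) (_ : Module.Projective R P)
      (Φ : P →ₗ[R] F) (ζ : Fin n → P), (∀ j, Φ (ζ j) = z j) ∧ ∀ i, ∑ j, r i j • ζ j = 0

theorem eqFlat_of_isFlat {F : Type u} [AddCommGroup F] [Module R F] (h : IsFlatModule R F) :
    EqFlat R F := by
  intro m n r z hz
  let p : (F →₀ R) →ₗ[R] F := Finsupp.linearCombination R id
  have hp : ∀ f : F, p (Finsupp.single f 1) = f := fun f => by simp [p]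
  have hs : Function.Surjective p := fun f => ⟨_, hp f⟩
  obtain ⟨x, hx⟩ := (h _ p hs).2 m n r
    (fun i => ⟨∑ j, r i j • Finsupp.single (z j) 1, by
      rw [LinearMap.mem_ker, map_sum]
      simpa only [map_smul, hp] using hz i⟩) ⟨fun j => Finsupp.single (z j) 1, fun i => rfl⟩
  refine ⟨F →₀ R, inferInstance, inferInstance, inferInstance, p,
    fun j => Finsupp.single (z j) 1 - (x j : F →₀ R), fun j => ?_, fun i => ?_⟩
  · rw [map_sub, hp, LinearMap.mem_ker.1 (x j).2, sub_zero]
  · have := congrArg Subtype.val (hx i)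
    simp only [smul_sub, Finset.sum_sub_distrib]
    rw [sub_eq_zero]
    refine Eq.trans this.symm ?_
    simp

theorem isFlat_of_eqFlat {F : Type u} [AddCommGroup F] [Module R F] (h : EqFlat R F) :
    IsFlatModule R F := by
  intro L _ _ p hp
  refine ⟨Subtype.val_injective, ?_⟩
  rintro m n r a ⟨y, hy⟩
  have hz : ∀ i, ∑ j, r i j • p (y j) = 0 := fun i => by
    have := congrArg p (hy i)
    rw [map_sum] at this
    simp only [map_smul] at this
    rw [this]
    exact (a i).2
  obtain ⟨P, _, _, _, Φ, ζ, h1, h2⟩ := h m n r _ hz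
  obtain ⟨Ψ, hΨ⟩ := Module.projective_lifting_property p Φ hp
  refine ⟨fun j => ⟨y j - Ψ (ζ j), ?_⟩, fun i => ?_⟩
  · rw [LinearMap.mem_ker, map_sub, ← h1, ← hΨ]; simp
  · apply Subtype.ext
    have h3 : ∑ j, r i j • Ψ (ζ j) = 0 := by
      rw [← map_zero Ψ, ← h2 i, map_sum]; simp
    have := hy i
    simp only [Submodule.subtype_apply] at this
    simp [smul_sub, Finset.sum_sub_distrib, h3, this]

theorem isFlat_quot {A B : Type u} [AddCommGroup A] [Module R A] [AddCommGroup B] [Module R B]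
    (f : A →ₗ[R] B) (hf : IsPureMono R f) (hB : IsFlatModule R B) :
    IsFlatModule R (B ⧸ LinearMap.range f) := by
  apply isFlat_of_eqFlat
  intro m n r z hz
  choose y hy using fun j => Submodule.mkQ_surjective (LinearMap.range f) (z j)
  have h1 : ∀ i, ∃ a, f a = ∑ j, r i j • y j := fun i => by
    have : ∑ j, r i j • y j ∈ LinearMap.range f := by
      rw [← Submodule.ker_mkQ (LinearMap.range f), LinearMap.mem_ker, map_sum, ← hz i]
      simp only [map_smul, hy]
    exact this
  choose a ha using h1
  obtain ⟨x, hx⟩ := hf.2 m n r a ⟨y, fun i => (ha i).symm⟩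
  obtain ⟨P, i1, i2, i3, Φ, ζ, h1, h2⟩ := eqFlat_of_isFlat hB m n r (fun j => y j - f (x j))
    (fun i => by
      simp only [smul_sub, Finset.sum_sub_distrib]
      rw [← ha i, ← hx i, map_sum]; simp)
  refine ⟨P, i1, i2, i3, (LinearMap.range f).mkQ ∘ₗ Φ, ζ, fun j => ?_, h2⟩
  rw [LinearMap.comp_apply, h1, map_sub, hy, sub_eq_self, ← LinearMap.mem_ker, Submodule.ker_mkQ]
  exact ⟨_, rfl⟩

/-- Monomorphisms with flat cokernel. -/
def Good {X Y : Type u} [AddCommGroup X] [Module R X] [AddCommGroup Y] [Module R Y]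
    (f : X →ₗ[R] Y) : Prop :=
  Function.Injective f ∧ IsFlatModule R (Y ⧸ LinearMap.range f)

/-- Extension property along good maps. -/
def ExtP (R : Type u) [Ring R] (E : Type u) [AddCommGroup E] [Module R E] : Prop :=
  ∀ (X Y : Type u) [AddCommGroup X] [Module R X] [AddCommGroup Y] [Module R Y]
    (j : X →ₗ[R] Y) (φ : X →ₗ[R] E), Good j → ∃ ψ : Y →ₗ[R] E, ∀ x, ψ (j x) = φ x

theorem isFlat_congr {A B : Type u} [AddCommGroup A] [Module R A] [AddCommGroup B] [Module R B]
    (e : A ≃ₗ[R] B) (hA : IsFlatModule R A) : IsFlatModule R B := by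
  apply isFlat_of_eqFlat
  intro m n r z hz
  obtain ⟨P, i1, i2, i3, Φ, ζ, h1, h2⟩ := eqFlat_of_isFlat hA m n r (fun j => e.symm (z j))
    (fun i => by
      have := congrArg e.symm (hz i)
      simpa using this)
  exact ⟨P, i1, i2, i3, e.toLinearMap ∘ₗ Φ, ζ, fun j => by simp [h1], h2⟩

theorem extP_of_cotorsion {E : Type u} [AddCommGroup E] [Module R E]
    (h : IsCotorsionModule R E) : ExtP R E := by
  intro X Y _ _ _ _ j φ hj
  let N : Submodule R (Y × E) := LinearMap.range (j.prod (-φ))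
  let v : E →ₗ[R] (Y × E) ⧸ N := N.mkQ ∘ₗ LinearMap.inr R Y E
  have hv : Function.Injective v := by
    rw [injective_iff_map_eq_zero]
    intro e he
    have : ((0 : Y), e) ∈ N := by
      rw [← Submodule.ker_mkQ N]; exact he
    obtain ⟨x, hx⟩ := this
    have h1 : j x = 0 := congrArg Prod.fst hx
    have h2 : - φ x = e := congrArg Prod.snd hx
    have : x = 0 := hj.1 (by rw [h1, map_zero])
    rw [← h2, this]; simp
  -- the cokernel of `v` is the cokernel of `j`
  let q : (Y × E) ⧸ N →ₗ[R] Y ⧸ LinearMap.range j :=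
    N.liftQ ((LinearMap.range j).mkQ ∘ₗ LinearMap.fst R Y E) (by
      rintro _ ⟨x, rfl⟩
      simp)
  have hq : Function.Surjective q := by
    intro y
    obtain ⟨y, rfl⟩ := Submodule.mkQ_surjective _ y
    exact ⟨N.mkQ (y, 0), by simp [q]⟩
  have hk : LinearMap.ker q = LinearMap.range v := by
    apply le_antisymm
    · intro w hw
      obtain ⟨⟨y, e⟩, rfl⟩ := Submodule.mkQ_surjective _ w
      have : y ∈ LinearMap.range j := by
        rw [← Submodule.ker_mkQ (LinearMap.range j)]; simpa [q] using hw
      obtain ⟨x, rfl⟩ := this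
      refine ⟨e + φ x, ?_⟩
      simp only [v, LinearMap.comp_apply]
      rw [← sub_eq_zero, ← map_sub, ← LinearMap.mem_ker, Submodule.ker_mkQ]
      refine ⟨-x, ?_⟩
      simp
    · rintro _ ⟨e, rfl⟩
      simp [q, v]
  have hfl : IsFlatModule R (((Y × E) ⧸ N) ⧸ LinearMap.range v) := by
    refine isFlat_congr ?_ hj.2
    exact ((Submodule.quotEquivOfEq _ _ hk.symm).trans (q.quotKerEquivOfSurjective hq)).symm
  obtain ⟨p, hp⟩ := h _ v hv hfl
  refine ⟨p ∘ₗ N.mkQ ∘ₗ LinearMap.inl R Y E, fun x => ?_⟩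
  have h1 : N.mkQ (LinearMap.inl R Y E (j x)) = v (φ x) := by
    simp only [v, LinearMap.comp_apply]
    rw [← sub_eq_zero, ← map_sub, ← LinearMap.mem_ker, Submodule.ker_mkQ]
    exact ⟨x, by simp⟩
  simp only [LinearMap.comp_apply, h1]
  exact LinearMap.congr_fun hp (φ x)

theorem extP_retract {E L : Type u} [AddCommGroup E] [Module R E] [AddCommGroup L] [Module R L]
    (h : ExtP R E) (i : L →ₗ[R] E) (p : E →ₗ[R] L) (hp : ∀ x, p (i x) = x) : ExtP R L := by
  intro X Y _ _ _ _ j φ hj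
  obtain ⟨ψ, hψ⟩ := h X Y j (i ∘ₗ φ) hj
  exact ⟨p ∘ₗ ψ, fun x => by simp [hψ, hp]⟩

theorem extP_prod {E L : Type u} [AddCommGroup E] [Module R E] [AddCommGroup L] [Module R L]
    (h : ExtP R E) (h' : ExtP R L) : ExtP R (E × L) := by
  intro X Y _ _ _ _ j φ hj
  obtain ⟨ψ, hψ⟩ := h X Y j (LinearMap.fst R E L ∘ₗ φ) hj
  obtain ⟨ψ', hψ'⟩ := h' X Y j (LinearMap.snd R E L ∘ₗ φ) hj
  exact ⟨ψ.prod ψ', fun x => by ext <;> simp [hψ, hψ']⟩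

end FC

namespace FC
variable {R}

/-- Relative flatness of the subquotient `A / P` of an ambient module. -/
def SubFlat {F : Type u} [AddCommGroup F] [Module R F] (A P : Submodule R F) : Prop :=
  ∀ (m n : ℕ) (r : Fin m → Fin n → R) (z : Fin n → F), (∀ j, z j ∈ A) →
    (∀ i, ∑ j, r i j • z j ∈ P) →
    ∃ (Q : Type u) (_ : AddCommGroup Q) (_ : Module R Q) (_ : Module.Projective R Q)
      (Φ : Q →ₗ[R] F) (ζ : Fin n → Q), (∀ q, Φ q ∈ A) ∧ (∀ j, z j - Φ (ζ j) ∈ P) ∧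
        ∀ i, ∑ j, r i j • ζ j = 0

section Tower

variable {X E W : Type u} [AddCommGroup X] [Module R X] [AddCommGroup E] [Module R E]

/-- The base inclusion `X → E → E^(W)`. -/
noncomputable def bas (ι : X →ₗ[R] E) (w : W) : X →ₗ[R] (W →₀ E) := Finsupp.lsingle w ∘ₗ ι

/-- Admissible pairs: the subquotient `E^(s) / K` is an extension of `X` with flat cokernel. -/
def Adm (ι : X →ₗ[R] E) (w : W) (s : Set W) (K : Submodule R (W →₀ E)) : Prop :=
  w ∈ s ∧ K ≤ Finsupp.supported E R s ∧ (∀ x, bas ι w x ∈ K → x = 0) ∧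
    SubFlat (Finsupp.supported E R s) (K ⊔ LinearMap.range (bas ι w))

theorem adm_of_map (ι : X →ₗ[R] E) (hι : Good ι) (w : W) (s : Set W) (hw : w ∈ s)
    (H : (W →₀ E) →ₗ[R] E) (hH : ∀ x, H (bas ι w x) = ι x) (t : W) (ht : t ∈ s)
    (hτ : ∀ e, H (Finsupp.single t e) = e) :
    Adm ι w s (Finsupp.supported E R s ⊓ LinearMap.ker H) := by
  refine ⟨hw, inf_le_left, fun x hx => ?_, ?_⟩
  · apply hι.1
    rw [← hH, map_zero]
    exact hx.2
  · intro m n r z hz hr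
    have h1 : ∀ i, ∑ j, r i j • (LinearMap.range ι).mkQ (H (z j)) = 0 := by
      intro i
      obtain ⟨k, hk, _, ⟨x, rfl⟩, he⟩ := Submodule.mem_sup.1 (hr i)
      have : H (∑ j, r i j • z j) = ι x := by
        rw [← he, map_add, hH, LinearMap.mem_ker.1 hk.2, zero_add]
      simp only [← map_smul, ← map_sum]
      rw [this, ← LinearMap.mem_ker, Submodule.ker_mkQ]
      exact ⟨x, rfl⟩
    obtain ⟨P, i1, i2, i3, Φ, ζ, h2, h3⟩ := eqFlat_of_isFlat hι.2 m n r _ h1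
    obtain ⟨Ψ, hΨ⟩ := Module.projective_lifting_property _ Φ
      (Submodule.mkQ_surjective (LinearMap.range ι))
    refine ⟨P, i1, i2, i3, Finsupp.lsingle t ∘ₗ Ψ, ζ, fun q => ?_, fun j => ?_, h3⟩
    · exact Finsupp.single_mem_supported R _ ht
    · have h4 : H (z j) - Ψ (ζ j) ∈ LinearMap.range ι := by
        rw [← Submodule.ker_mkQ (LinearMap.range ι), LinearMap.mem_ker, map_sub, ← h2, ← hΨ]
        simp
      obtain ⟨x, hx⟩ := h4
      rw [Submodule.mem_sup]
      refine ⟨z j - Finsupp.single t (Ψ (ζ j)) - bas ι w x, ⟨?_, ?_⟩, bas ι w x, ⟨x, rfl⟩, ?_⟩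
      · refine Submodule.sub_mem _ (Submodule.sub_mem _ (hz j) ?_) ?_
        · exact Finsupp.single_mem_supported R _ ht
        · exact Finsupp.single_mem_supported R _ hw
      · rw [SetLike.mem_coe, LinearMap.mem_ker, map_sub, map_sub, hH, hτ, hx, sub_self]
      · simp

theorem fst_mem {c : Set (Set W × Submodule R (W →₀ E))} {t : W} :
    t ∈ (sSup c).1 ↔ ∃ p ∈ c, t ∈ p.1 := by
  rw [Prod.fst_sSup]; simp

theorem snd_mem {c : Set (Set W × Submodule R (W →₀ E))} (hc : IsChain (· ≤ ·) c)
    (hn : c.Nonempty) {a : W →₀ E} : a ∈ (sSup c).2 ↔ ∃ p ∈ c, a ∈ p.2 := by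
  rw [Prod.snd_sSup, Submodule.mem_sSup_of_directed (hn.image _)]
  · constructor
    · rintro ⟨_, ⟨p, hp, rfl⟩, h⟩
      exact ⟨p, hp, h⟩
    · rintro ⟨p, hp, h⟩
      exact ⟨_, ⟨p, hp, rfl⟩, h⟩
  · rintro _ ⟨p, hp, rfl⟩ _ ⟨q, hq, rfl⟩
    rcases hc.total hp hq with h | h
    · exact ⟨q.2, ⟨q, hq, rfl⟩, h.2, le_rfl⟩
    · exact ⟨p.2, ⟨p, hp, rfl⟩, le_rfl, h.2⟩

theorem supp_mem {c : Set (Set W × Submodule R (W →₀ E))} (hc : IsChain (· ≤ ·) c)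
    (hn : c.Nonempty) {a : W →₀ E} (ha : a ∈ Finsupp.supported E R (sSup c).1) :
    ∃ p ∈ c, a ∈ Finsupp.supported E R p.1 := by
  have h1 : (sSup c).1 = ⋃ p : c, p.1.1 := by
    ext t; rw [fst_mem]; simp
  have : Nonempty c := hn.to_subtype
  rw [h1, Finsupp.supported_iUnion, Submodule.mem_iSup_of_directed] at ha
  · obtain ⟨p, hp⟩ := ha
    exact ⟨p.1, p.2, hp⟩
  · rintro p q
    rcases hc.total p.2 q.2 with h | h
    · exact ⟨q, Finsupp.supported_mono h.1, le_rfl⟩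
    · exact ⟨p, le_rfl, Finsupp.supported_mono h.1⟩

/-- Finitely many conditions that hold eventually hold simultaneously. -/
theorem chain_fin {α : Type*} [Preorder α] {c : Set α} (hc : IsChain (· ≤ ·) c) (hn : c.Nonempty)
    {n : ℕ} (f : Fin n → α) (hf : ∀ i, f i ∈ c) : ∃ p ∈ c, ∀ i, f i ≤ p := by
  induction n with
  | zero => exact ⟨hn.some, hn.some_mem, fun i => i.elim0⟩
  | succ n ih =>
    obtain ⟨p, hp, h⟩ := ih (fun i => f i.succ) (fun i => hf _)
    rcases hc.total hp (hf 0) with h' | h'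
    · exact ⟨f 0, hf 0, fun i => Fin.cases le_rfl (fun i => (h i).trans h') i⟩
    · exact ⟨p, hp, fun i => Fin.cases h' h i⟩

theorem adm_sSup (ι : X →ₗ[R] E) (w : W) {c : Set (Set W × Submodule R (W →₀ E))}
    (hc : IsChain (· ≤ ·) c) (hn : c.Nonempty) (h : ∀ p ∈ c, Adm ι w p.1 p.2) :
    Adm ι w (sSup c).1 (sSup c).2 := by
  obtain ⟨p0, hp0⟩ := hn
  refine ⟨fst_mem.2 ⟨p0, hp0, (h p0 hp0).1⟩, ?_, ?_, ?_⟩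
  · intro a ha
    obtain ⟨p, hp, hap⟩ := (snd_mem hc ⟨p0, hp0⟩).1 ha
    exact Finsupp.supported_mono (le_sSup hp).1 ((h p hp).2.1 hap)
  · intro x hx
    obtain ⟨p, hp, hap⟩ := (snd_mem hc ⟨p0, hp0⟩).1 hx
    exact (h p hp).2.2.1 x hap
  · intro m n r z hz hr
    choose f hf hf' using fun j => supp_mem hc ⟨p0, hp0⟩ (hz j)
    have h1 : ∀ i, ∃ p ∈ c, ∑ j, r i j • z j ∈ p.2 ⊔ LinearMap.range (bas ι w) := by
      intro i
      obtain ⟨k, hk, y, hy, he⟩ := Submodule.mem_sup.1 (hr i)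
      obtain ⟨p, hp, hap⟩ := (snd_mem hc ⟨p0, hp0⟩).1 hk
      exact ⟨p, hp, Submodule.mem_sup.2 ⟨k, hap, y, hy, he⟩⟩
    choose g hg hg' using h1
    obtain ⟨p1, hp1, h1⟩ := chain_fin hc ⟨p0, hp0⟩ f hf
    obtain ⟨p2, hp2, h2⟩ := chain_fin hc ⟨p0, hp0⟩ g hg
    obtain ⟨p, hp, h3, h4⟩ : ∃ p ∈ c, p1 ≤ p ∧ p2 ≤ p := by
      rcases hc.total hp1 hp2 with h' | h'
      · exact ⟨p2, hp2, h', le_rfl⟩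
      · exact ⟨p1, hp1, le_rfl, h'⟩
    obtain ⟨Q, i1, i2, i3, Φ, ζ, k1, k2, k3⟩ := (h p hp).2.2.2 m n r z
      (fun j => Finsupp.supported_mono ((h1 j).trans h3).1 (hf' j))
      (fun i => sup_le_sup_right ((h2 i).trans h4).2 _ (hg' i))
    exact ⟨Q, i1, i2, i3, Φ, ζ, fun q => Finsupp.supported_mono (le_sSup hp).1 (k1 q),
      fun j => sup_le_sup_right (le_sSup hp).2 _ (k2 j), k3⟩

/-- The extension of `g ∘ c` by the identity on the copy of `E` indexed by `t`. -/
noncomputable def extd (g : E →ₗ[R] E) (c : (W →₀ E) →ₗ[R] E) (t : W) : (W →₀ E) →ₗ[R] E :=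
  g ∘ₗ c + (LinearMap.id - g ∘ₗ c ∘ₗ Finsupp.lsingle t) ∘ₗ Finsupp.lapply t

theorem extd_single (g : E →ₗ[R] E) (c : (W →₀ E) →ₗ[R] E) (t : W) (e : E) :
    extd g c t (Finsupp.single t e) = e := by
  simp [extd]

theorem extd_old (g : E →ₗ[R] E) (c : (W →₀ E) →ₗ[R] E) (t : W) {s : Set W} (ht : t ∉ s)
    {a : W →₀ E} (ha : a ∈ Finsupp.supported E R s) : extd g c t a = g (c a) := by
  have : a t = 0 := by
    rw [Finsupp.mem_supported'] at ha
    exact ha t ht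
  simp [extd, this]

theorem exists_max (ι : X →ₗ[R] E) (hι : Good ι) (w : W)
    (Q : Set W → Submodule R (W →₀ E) → Prop)
    (hQ0 : Q {w} (Finsupp.supported E R {w} ⊓ LinearMap.ker (Finsupp.lapply w)))
    (hQc : ∀ c : Set (Set W × Submodule R (W →₀ E)), IsChain (· ≤ ·) c → c.Nonempty →
      (∀ p ∈ c, Q p.1 p.2) → Q (sSup c).1 (sSup c).2) :
    ∃ (s : Set W) (K : Submodule R (W →₀ E)), Adm ι w s K ∧ Q s K ∧
      ∀ (c : (W →₀ E) →ₗ[R] E), (∀ a ∈ K, c a = 0) → (∀ x, c (bas ι w x) = ι x) →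
      ∀ t, t ∉ s → ∀ g : E →ₗ[R] E, (∀ x, g (ι x) = ι x) →
        ¬ Q (insert t s) (Finsupp.supported E R (insert t s) ⊓ LinearMap.ker (extd g c t)) := by
  obtain ⟨m, -, hm⟩ := zorn_le_nonempty₀
    {p : Set W × Submodule R (W →₀ E) | Adm ι w p.1 p.2 ∧ Q p.1 p.2}
    (fun c hcs hc y hy => ⟨sSup c, ⟨adm_sSup ι w hc ⟨y, hy⟩ fun p hp => (hcs hp).1,
      hQc c hc ⟨y, hy⟩ fun p hp => (hcs hp).2⟩, fun z hz => le_sSup hz⟩)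
    ({w}, Finsupp.supported E R {w} ⊓ LinearMap.ker (Finsupp.lapply w))
    ⟨adm_of_map ι hι w {w} rfl (Finsupp.lapply w) (fun x => by simp [bas]) w rfl
      (fun e => by simp), hQ0⟩
  refine ⟨m.1, m.2, hm.1.1, hm.1.2, fun c hc hcx t ht g hg hQ => ht ?_⟩
  have hA := hm.1.1
  have h1 : Adm ι w (insert t m.1)
      (Finsupp.supported E R (insert t m.1) ⊓ LinearMap.ker (extd g c t)) := by
    refine adm_of_map ι hι w _ (Set.mem_insert_of_mem _ hA.1) _ (fun x => ?_) t
      (Set.mem_insert _ _) (fun e => extd_single _ _ _ _)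
    rw [extd_old g c t ht, hcx, hg]
    exact Finsupp.single_mem_supported R _ hA.1
  have h2 : m ≤ (insert t m.1, Finsupp.supported E R (insert t m.1) ⊓
      LinearMap.ker (extd g c t)) := by
    refine ⟨Set.subset_insert _ _, fun a ha => ⟨?_, ?_⟩⟩
    · exact Finsupp.supported_mono (Set.subset_insert _ _) (hA.2.1 ha)
    · rw [SetLike.mem_coe, LinearMap.mem_ker, extd_old g c t ht (hA.2.1 ha), hc a ha, map_zero]
  exact (hm.2 ⟨h1, hQ⟩ h2).1 (Set.mem_insert _ _)

/-- The module `E^(s) / K`. -/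
abbrev Yq (s : Set W) (K : Submodule R (W →₀ E)) : Type u :=
  (Finsupp.supported E R s) ⧸ (K.comap (Finsupp.supported E R s).subtype)

open Classical in
/-- The projection of `E^(W)` to `E^(s) / K`. -/
noncomputable def prj (s : Set W) (K : Submodule R (W →₀ E)) : (W →₀ E) →ₗ[R] Yq s K :=
  (K.comap (Finsupp.supported E R s).subtype).mkQ ∘ₗ Finsupp.restrictDom E R s

theorem prj_eq (s : Set W) (K : Submodule R (W →₀ E)) (a : W →₀ E)
    (ha : a ∈ Finsupp.supported E R s) :
    prj s K a = (K.comap (Finsupp.supported E R s).subtype).mkQ ⟨a, ha⟩ := by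
  classical
  unfold prj
  rw [LinearMap.comp_apply]
  congr 1
  apply Subtype.ext
  rw [Finsupp.restrictDom_apply]
  rw [Finsupp.filter_eq_self_iff]
  intro x hx
  by_contra hxs
  exact hx ((Finsupp.mem_supported' R a).1 ha x hxs)

theorem prj_eq_zero (s : Set W) (K : Submodule R (W →₀ E)) (a : W →₀ E)
    (ha : a ∈ Finsupp.supported E R s) : prj s K a = 0 ↔ a ∈ K := by
  rw [prj_eq s K a ha, ← LinearMap.mem_ker, Submodule.ker_mkQ]; rfl

theorem prj_surj (s : Set W) (K : Submodule R (W →₀ E)) (y : Yq s K) :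
    ∃ a ∈ Finsupp.supported E R s, prj s K a = y := by
  obtain ⟨⟨a, ha⟩, rfl⟩ := Submodule.mkQ_surjective _ y
  exact ⟨a, ha, prj_eq s K a ha⟩

theorem good_prj (ι : X →ₗ[R] E) (w : W) (s : Set W) (K : Submodule R (W →₀ E))
    (h : Adm ι w s K) : Good (prj s K ∘ₗ bas ι w) := by
  have hb : ∀ x, bas ι w x ∈ Finsupp.supported E R s := fun x =>
    Finsupp.single_mem_supported R _ h.1
  constructor
  · rw [injective_iff_map_eq_zero]
    intro x hx
    exact h.2.2.1 x ((prj_eq_zero s K _ (hb x)).1 hx)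
  · apply isFlat_of_eqFlat
    intro m n r z hz
    choose y hy using fun j => Submodule.mkQ_surjective _ (z j)
    choose a ha ha' using fun j => prj_surj s K (y j)
    obtain ⟨Q, i1, i2, i3, Φ, ζ, k1, k2, k3⟩ := h.2.2.2 m n r a ha (fun i => by
      have h1 : ∑ j, r i j • y j ∈ LinearMap.range (prj s K ∘ₗ bas ι w) := by
        rw [← Submodule.ker_mkQ (LinearMap.range (prj s K ∘ₗ bas ι w)), LinearMap.mem_ker,
          map_sum, ← hz i]
        simp only [map_smul, hy]
      obtain ⟨x, hx⟩ := h1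
      have h2 : prj s K (∑ j, r i j • a j - bas ι w x) = 0 := by
        rw [map_sub, map_sum, sub_eq_zero]
        simp only [map_smul, ha']
        exact hx.symm
      rw [prj_eq_zero] at h2
      · exact Submodule.mem_sup.2 ⟨_, h2, bas ι w x, ⟨x, rfl⟩, by simp⟩
      · exact Submodule.sub_mem _ (Submodule.sum_mem _ fun j _ => Submodule.smul_mem _ _ (ha j))
          (hb x))
    refine ⟨Q, i1, i2, i3, Submodule.mkQ _ ∘ₗ prj s K ∘ₗ Φ, ζ, fun j => ?_, k3⟩
    obtain ⟨k, hk, _, ⟨x, rfl⟩, he⟩ := Submodule.mem_sup.1 (k2 j)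
    rw [← hy j, eq_comm, ← sub_eq_zero, LinearMap.comp_apply, ← map_sub, ← LinearMap.mem_ker,
      Submodule.ker_mkQ, LinearMap.comp_apply, ← ha' j, ← map_sub, ← he, map_add,
      (prj_eq_zero s K k (h.2.1 hk)).2 hk, zero_add]
    exact ⟨x, rfl⟩

end Tower
end FC

namespace FC
variable {R}

/-- Weak terminality of `ι` among the good extensions of `X`. -/
def WI {X E : Type u} [AddCommGroup X] [Module R X] [AddCommGroup E] [Module R E]
    (ι : X →ₗ[R] E) : Prop :=
  ∀ (Y : Type u) [AddCommGroup Y] [Module R Y] (j : X →ₗ[R] Y), Good j →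
    ∃ ψ : Y →ₗ[R] E, ∀ x, ψ (j x) = ι x

section Env

variable {X E : Type u} [AddCommGroup X] [Module R X] [AddCommGroup E] [Module R E]

theorem sub_single_mem {W : Type u} (s : Set W) (H : (W →₀ E) →ₗ[R] E) (t : W) (ht : t ∈ s)
    (hτ : ∀ e, H (Finsupp.single t e) = e) (a : W →₀ E) (ha : a ∈ Finsupp.supported E R s) :
    a - Finsupp.single t (H a) ∈ Finsupp.supported E R s ⊓ LinearMap.ker H := by
  refine ⟨Submodule.sub_mem _ ha (Finsupp.single_mem_supported R _ ht), ?_⟩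
  rw [SetLike.mem_coe, LinearMap.mem_ker, map_sub, hτ, sub_self]

set_option maxHeartbeats 1600000 in
theorem exists_allInj (ι : X →ₗ[R] E) (hι : Good ι) (hE : WI ι) :
    ∃ (L : Type u) (_ : AddCommGroup L) (_ : Module R L) (l : X →ₗ[R] L), Good l ∧ WI l ∧
      ∀ g : L →ₗ[R] L, (∀ x, g (l x) = l x) → Function.Injective g := by
  let W := List (Submodule R E)
  let Q : Set W → Submodule R (W →₀ E) → Prop := fun s K =>
    (∀ (t : W) (k : Submodule R E), (k :: t : W) ∈ s → k < K.comap (Finsupp.lsingle t)) ∧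
    (∀ a ∈ Finsupp.supported E R s, ∃ t ∈ s, ∃ e, a - Finsupp.single t e ∈ K)
  obtain ⟨s, K, hA, hQ, hmax⟩ := exists_max (W := W) ι hι [] Q
    ⟨fun t k h => absurd h (by simp), fun a ha => ⟨[], rfl, _,
      sub_single_mem {[]} (Finsupp.lapply []) [] rfl (fun e => by simp) a ha⟩⟩
    (by
      intro c hc hn hq
      refine ⟨fun t k h => ?_, fun a ha => ?_⟩
      · obtain ⟨p, hp, h'⟩ := fst_mem.1 h
        exact lt_of_lt_of_le ((hq p hp).1 t k h') (Submodule.comap_mono (le_sSup hp).2)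
      · obtain ⟨p, hp, h'⟩ := supp_mem hc hn ha
        obtain ⟨t, ht, e, he⟩ := (hq p hp).2 a h'
        exact ⟨t, fst_mem.2 ⟨p, hp, ht⟩, e, (le_sSup hp).2 he⟩)
  have hgood := good_prj ι [] s K hA
  -- every map to `E` is injective
  have key : ∀ g : Yq s K →ₗ[R] E, (∀ x, g (prj s K (bas ι [] x)) = ι x) →
      Function.Injective g := by
    intro g hg
    rw [injective_iff_map_eq_zero]
    intro y hy
    obtain ⟨a, ha, rfl⟩ := prj_surj s K y
    obtain ⟨t, ht, e, he⟩ := hQ.2 a ha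
    have hse : Finsupp.single t e ∈ Finsupp.supported E R s := Finsupp.single_mem_supported R _ ht
    let c : (W →₀ E) →ₗ[R] E := g ∘ₗ prj s K
    have hcK : ∀ a ∈ K, c a = 0 := fun a ha => by
      simp only [c, LinearMap.comp_apply]
      rw [(prj_eq_zero s K a (hA.2.1 ha)).2 ha, map_zero]
    have hce : c (Finsupp.single t e) = 0 := by
      have h1 := hcK _ he
      rw [map_sub, sub_eq_zero] at h1
      rw [← h1]; exact hy
    rw [prj_eq_zero s K a ha]
    by_contra haK
    have heK : Finsupp.single t e ∉ K := fun h => haK (by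
      have := K.add_mem he h
      simpa using this)
    let k : Submodule R E := K.comap (Finsupp.lsingle t)
    have hns : (k :: t : W) ∉ s := fun h => lt_irrefl _ (hQ.1 t k h)
    have hKK : K ≤ Finsupp.supported E R (insert (k :: t : W) s) ⊓
        LinearMap.ker (extd LinearMap.id c (k :: t : W)) := by
      intro b hb
      refine ⟨Finsupp.supported_mono (Set.subset_insert _ _) (hA.2.1 hb), ?_⟩
      rw [SetLike.mem_coe, LinearMap.mem_ker, extd_old _ c _ hns (hA.2.1 hb), hcK b hb, map_zero]
    refine hmax c hcK hg (k :: t : W) hns LinearMap.id (fun x => rfl) ⟨?_, ?_⟩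
    · intro t' k' h
      rcases h with h | h
      · obtain ⟨rfl, rfl⟩ := List.cons.inj h
        refine lt_of_le_of_ne (Submodule.comap_mono hKK) (fun heq => heK ?_)
        have : e ∈ k := by
          rw [heq]
          refine ⟨Finsupp.supported_mono (Set.subset_insert _ _) hse, ?_⟩
          rw [SetLike.mem_coe, LinearMap.mem_ker, Finsupp.lsingle_apply,
            extd_old _ c _ hns hse, hce, map_zero]
        exact this
      · exact lt_of_lt_of_le (hQ.1 t' k' h) (Submodule.comap_mono hKK)
    · intro b hb
      exact ⟨_, Set.mem_insert _ _, _,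
        sub_single_mem _ _ _ (Set.mem_insert _ _) (fun e => extd_single _ _ _ _) b hb⟩
  refine ⟨Yq s K, inferInstance, inferInstance, prj s K ∘ₗ bas ι [], hgood, ?_, ?_⟩
  · intro Y _ _ j hj
    obtain ⟨ψ, hψ⟩ := hE Y j hj
    exact ⟨prj s K ∘ₗ Finsupp.lsingle [] ∘ₗ ψ, fun x => by simp [hψ, bas]⟩
  · intro g hg
    obtain ⟨ψ, hψ⟩ := hE _ _ hgood
    have := key (ψ ∘ₗ g) (fun x => by
      have h1 := hg x
      simp only [LinearMap.comp_apply] at h1 hψ ⊢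
      rw [h1, hψ])
    exact Function.Injective.of_comp (f := ψ) this

theorem allInj_surj (ι : X →ₗ[R] E) (hι : Good ι) (hE : WI ι)
    (hinj : ∀ g : E →ₗ[R] E, (∀ x, g (ι x) = ι x) → Function.Injective g)
    (f : E →ₗ[R] E) (hf : ∀ x, f (ι x) = ι x) : Function.Surjective f := by
  intro l
  by_contra hl
  have hl' : ∀ e, f e ≠ l := fun e he => hl ⟨e, he⟩
  let W := Set E
  let w : W := ∅
  let Q : Set W → Submodule R (W →₀ E) → Prop := fun s K =>
    (∀ t ∈ s, ∀ t' ∈ s, t ≠ t' → Finsupp.single t l - Finsupp.single t' l ∉ K) ∧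
    (∀ h : (W →₀ E) →ₗ[R] E, (∀ a ∈ K, h a = 0) → (∀ x, h (bas ι w x) = ι x) →
      ∀ a ∈ Finsupp.supported E R s, h a = 0 → a ∈ K)
  -- the second condition holds for kernels of split maps onto `E`
  have hsec : ∀ (s : Set W) (hw : w ∈ s) (H : (W →₀ E) →ₗ[R] E)
      (hH : ∀ x, H (bas ι w x) = ι x) (t : W) (ht : t ∈ s)
      (hτ : ∀ e, H (Finsupp.single t e) = e) (h : (W →₀ E) →ₗ[R] E)
      (h0 : ∀ a ∈ Finsupp.supported E R s ⊓ LinearMap.ker H, h a = 0)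
      (hx : ∀ x, h (bas ι w x) = ι x), ∀ a ∈ Finsupp.supported E R s, h a = 0 →
      a ∈ Finsupp.supported E R s ⊓ LinearMap.ker H := by
    intro s hw H hH t ht hτ h h0 hx a ha hha
    have h1 : ∀ b ∈ Finsupp.supported E R s, h b = h (Finsupp.single t (H b)) := by
      intro b hb
      have := h0 _ (sub_single_mem s H t ht hτ b hb)
      rwa [map_sub, sub_eq_zero] at this
    have h2 : Function.Injective (h ∘ₗ Finsupp.lsingle t) := by
      apply hinj
      intro x
      have h3 := h1 (bas ι w x) (Finsupp.single_mem_supported R _ hw)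
      rw [hH, hx] at h3
      exact h3.symm
    refine ⟨ha, ?_⟩
    rw [SetLike.mem_coe, LinearMap.mem_ker]
    apply h2
    rw [map_zero, LinearMap.comp_apply, Finsupp.lsingle_apply, ← h1 a ha, hha]
  obtain ⟨s, K, hA, hQ, hmax⟩ := exists_max (W := W) ι hι w Q
    ⟨fun t ht t' ht' hne => absurd (ht.trans ht'.symm) hne,
      hsec {w} rfl (Finsupp.lapply w) (fun x => by simp [bas]) w rfl (fun e => by simp)⟩
    (by
      intro c hc hn hq
      refine ⟨fun t ht t' ht' hne hK => ?_, fun h h0 hx a ha hha => ?_⟩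
      · obtain ⟨p1, hp1, h1⟩ := fst_mem.1 ht
        obtain ⟨p2, hp2, h2⟩ := fst_mem.1 ht'
        obtain ⟨p3, hp3, h3⟩ := (snd_mem hc hn).1 hK
        obtain ⟨p, hp, hle⟩ := chain_fin hc hn ![p1, p2, p3] (by
          intro i; fin_cases i <;> assumption)
        exact (hq p hp).1 t ((hle 0).1 h1) t' ((hle 1).1 h2) hne ((hle 2).2 h3)
      · obtain ⟨p, hp, h'⟩ := supp_mem hc hn ha
        exact (le_sSup hp).2 ((hq p hp).2 h (fun b hb => h0 b ((le_sSup hp).2 hb)) hx a h' hha))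
  obtain ⟨ψ, hψ⟩ := hE _ _ (good_prj ι w s K hA)
  let c : (W →₀ E) →ₗ[R] E := ψ ∘ₗ prj s K
  have hcK : ∀ a ∈ K, c a = 0 := fun a ha => by
    simp only [c, LinearMap.comp_apply]
    rw [(prj_eq_zero s K a (hA.2.1 ha)).2 ha, map_zero]
  have hcx : ∀ x, c (bas ι w x) = ι x := hψ
  have hsl : ∀ t ∈ s, Finsupp.single t l ∈ Finsupp.supported E R s := fun t ht =>
    Finsupp.single_mem_supported R _ ht
  have hcinj : ∀ t ∈ s, ∀ t' ∈ s, t ≠ t' → c (Finsupp.single t l) ≠ c (Finsupp.single t' l) := by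
    intro t ht t' ht' hne heq
    apply hQ.1 t ht t' ht' hne
    apply hQ.2 c hcK hcx _ (Submodule.sub_mem _ (hsl t ht) (hsl t' ht'))
    rw [map_sub, heq, sub_self]
  obtain ⟨t, ht⟩ : ∃ t, t ∉ s := by
    by_contra! hall
    apply Function.cantor_injective (fun t : Set E => c (Finsupp.single t l))
    intro t t' h
    by_contra hne
    exact hcinj t (hall t) t' (hall t') hne h
  have hfi := hinj f hf
  refine hmax c hcK hcx t ht f hf ⟨?_, ?_⟩
  · intro t1 ht1 t2 ht2 hne hK
    have h1 := LinearMap.mem_ker.1 hK.2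
    rw [map_sub, sub_eq_zero] at h1
    rcases ht1 with rfl | ht1 <;> rcases ht2 with rfl | ht2
    · exact hne rfl
    · rw [extd_single, extd_old f c _ ht (hsl t2 ht2)] at h1
      exact hl' _ h1.symm
    · rw [extd_single, extd_old f c _ ht (hsl t1 ht1)] at h1
      exact hl' _ h1
    · rw [extd_old f c _ ht (hsl t1 ht1), extd_old f c _ ht (hsl t2 ht2)] at h1
      exact hcinj t1 ht1 t2 ht2 hne (hfi h1)
  · refine hsec _ (Set.mem_insert_of_mem _ hA.1) _ (fun x => ?_) t (Set.mem_insert _ _)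
      (fun e => extd_single _ _ _ _)
    rw [extd_old f c t ht, hcx, hf]
    exact Finsupp.single_mem_supported R _ hA.1

theorem exists_env (ι : X →ₗ[R] E) (hι : Good ι) (hE : WI ι) :
    ∃ (L : Type u) (_ : AddCommGroup L) (_ : Module R L) (l : X →ₗ[R] L), Good l ∧ WI l ∧
      ∀ g : L →ₗ[R] L, (∀ x, g (l x) = l x) → Function.Bijective g := by
  obtain ⟨L, i1, i2, l, h1, h2, h3⟩ := exists_allInj ι hι hE
  exact ⟨L, i1, i2, l, h1, h2, fun g hg => ⟨h3 g hg, allInj_surj l h1 h2 h3 g hg⟩⟩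

/-- A split monomorphism gives a product decomposition. -/
theorem split_prod {A B : Type u} [AddCommGroup A] [Module R A] [AddCommGroup B] [Module R B]
    (i : A →ₗ[R] B) (p : B →ₗ[R] A) (h : ∀ a, p (i a) = a) :
    Nonempty (B ≃ₗ[R] LinearMap.ker p × A) := by
  refine ⟨LinearEquiv.ofBijective
    (((LinearMap.id - i ∘ₗ p).codRestrict (LinearMap.ker p) (fun b => by simp [h])).prod p)
    ⟨?_, ?_⟩⟩
  · rw [injective_iff_map_eq_zero]
    intro b hb
    have h1 := congrArg Prod.snd hb
    have h2 := congrArg (fun z => (z.1 : B)) hb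
    simp only [LinearMap.prod_apply, Function.prod_apply, Prod.snd_zero] at h1
    simpa [h1] using h2
  · rintro ⟨⟨k, hk⟩, a⟩
    refine ⟨k + i a, ?_⟩
    have hk' : p k = 0 := hk
    ext <;> simp [h, hk']

/-- Absorption: if `C^(ℕ)` has a good embedding in `E` with `E` and `C` having the extension
property, then `E ≅ C × E`. -/
theorem absorb {C : Type u} [AddCommGroup C] [Module R C] (hC : ExtP R C) (hE : ExtP R E)
    (ι : (ℕ →₀ C) →ₗ[R] E) (hι : Good ι) : Nonempty ((C × E) ≃ₗ[R] E) := by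
  obtain ⟨L, _, _, l, hl, hWI, hbij⟩ := exists_env ι hι (fun Y _ _ j hj => hE _ _ j ι hj)
  -- `L` is a direct summand of `E`
  obtain ⟨a, ha⟩ := hE _ _ l ι hl
  obtain ⟨b, hb⟩ := hWI _ ι hι
  let φ : L ≃ₗ[R] L := LinearEquiv.ofBijective (b ∘ₗ a) (hbij _ (fun x => by simp [ha, hb]))
  have hφ : ∀ x, (φ.symm.toLinearMap ∘ₗ b) (a x) = x := fun x => φ.symm_apply_apply x
  have hL : ExtP R L := extP_retract hE a _ hφ
  obtain ⟨d⟩ := split_prod a (φ.symm.toLinearMap ∘ₗ b) hφ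
  -- `C × L ≅ L`
  let σ : (C × (ℕ →₀ C)) ≃ₗ[R] (ℕ →₀ C) :=
    ((LinearEquiv.prodCongr (Finsupp.uniqueLinearEquiv R C (Unit.unit)).symm
      (LinearEquiv.refl R _)).trans
      (Finsupp.sumFinsuppLEquivProdFinsupp R).symm).trans
      (Finsupp.domLCongr ((Equiv.sumComm _ _).trans Equiv.natSumPUnitEquivNat))
  let j : (C × (ℕ →₀ C)) →ₗ[R] C × L := LinearMap.prodMap LinearMap.id l
  have hj : Good j := by
    constructor
    · rintro ⟨c, x⟩ ⟨c', x'⟩ h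
      simp only [j, LinearMap.prodMap_apply, Prod.mk.injEq] at h
      rw [Prod.mk.injEq]
      exact ⟨h.1, hl.1 h.2⟩
    · let q : C × L →ₗ[R] L ⧸ LinearMap.range l := (LinearMap.range l).mkQ ∘ₗ LinearMap.snd R C L
      have hq : Function.Surjective q := fun y => by
        obtain ⟨y, rfl⟩ := Submodule.mkQ_surjective _ y
        exact ⟨(0, y), rfl⟩
      have hk : LinearMap.range j = LinearMap.ker q := by
        ext ⟨c, y⟩
        rw [LinearMap.mem_ker]
        simp only [q, LinearMap.comp_apply, LinearMap.snd_apply]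
        rw [← LinearMap.mem_ker, Submodule.ker_mkQ]
        constructor
        · rintro ⟨⟨c', x⟩, h⟩
          exact ⟨x, congrArg Prod.snd h⟩
        · rintro ⟨x, hx⟩
          exact ⟨(c, x), by simp [j, hx]⟩
      refine isFlat_congr ?_ hl.2
      exact ((Submodule.quotEquivOfEq _ _ hk).trans (q.quotKerEquivOfSurjective hq)).symm
  obtain ⟨α, hα⟩ := hL _ _ j (l ∘ₗ σ.toLinearMap) hj
  obtain ⟨β, hβ⟩ := (extP_prod hC hL) _ _ l (j ∘ₗ σ.symm.toLinearMap) hl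
  have h1 : Function.Surjective α := by
    have := (hbij (α ∘ₗ β) (fun x => by
      rw [LinearMap.comp_apply, hβ, LinearMap.comp_apply, hα]; simp)).2
    exact Function.Surjective.of_comp (g := β) this
  have h2 : ∀ z, β (α (j z)) = j z := fun z => by
    rw [hα, LinearMap.comp_apply, hβ]; simp
  have h3 : Function.Injective α := by
    rw [injective_iff_map_eq_zero]
    rintro ⟨c, y⟩ hz
    have h4 : ∀ c, β (α (c, 0)) = (c, 0) := fun c => by simpa [j] using h2 (c, 0)
    have h5 := (hbij (LinearMap.snd R C L ∘ₗ β ∘ₗ α ∘ₗ LinearMap.inr R C L) (fun x => by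
      have := h2 (0, x)
      simp only [j, LinearMap.prodMap_apply, map_zero] at this
      simp [this])).1
    have h6 : β (α (0, y)) = (-c, 0) := by
      have h7 : ((0 : C), y) = (c, y) - (c, 0) := by simp
      rw [h7, map_sub, map_sub, hz, h4]; simp
    have hy : y = 0 := by
      apply h5
      rw [map_zero]
      simp [h6]
    subst hy
    have h8 := h4 c
    rw [hz, map_zero] at h8
    exact h8.symm
  let e : (C × L) ≃ₗ[R] L := LinearEquiv.ofBijective α ⟨h3, h1⟩
  let M := LinearMap.ker (φ.symm.toLinearMap ∘ₗ b)
  refine ⟨?_⟩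
  have d' : E ≃ₗ[R] L × M := d.trans (LinearEquiv.prodComm R _ _)
  exact (((LinearEquiv.prodCongr (LinearEquiv.refl R C) d').trans
    (LinearEquiv.prodAssoc R C L M).symm).trans
    (LinearEquiv.prodCongr e (LinearEquiv.refl R M))).trans d'.symm

end Env
end FC

/-- If `E` is flat cotorsion, `E'` is a pure submodule of `E` which is also flat cotorsion,
and there is a pure monomorphism `u : E → E'`, then `E ≅ E'`. -/
theorem stmt7 (E : Type u) [AddCommGroup E] [Module R E]
    (hEflat : IsFlatModule R E) (hEcot : IsCotorsionModule R E)
    (E' : Submodule R E) (hE'pure : IsPureMono R E'.subtype)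
    (hE'flat : IsFlatModule R E') (hE'cot : IsCotorsionModule R E')
    (u : E →ₗ[R] E') (hu : IsPureMono R u) :
    Nonempty (E ≃ₗ[R] E') := by
  obtain ⟨p, hp'⟩ := hE'cot _ E'.subtype hE'pure.1 (FC.isFlat_quot _ hE'pure hEflat)
  obtain ⟨q, hq'⟩ := hEcot _ u hu.1 (FC.isFlat_quot _ hu hE'flat)
  have hp : ∀ y : E', p (y : E) = y := fun y => LinearMap.congr_fun hp' y
  have hq : ∀ y, q (u y) = y := fun y => LinearMap.congr_fun hq' y
  let C := LinearMap.ker p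
  let pc : E →ₗ[R] C := (LinearMap.id - E'.subtype ∘ₗ p).codRestrict C (fun b => by
    simp [C, hp])
  have hpcC : ∀ c : C, pc (c : E) = c := fun c => by
    have : p (c : E) = 0 := c.2
    apply Subtype.ext
    change (c : E) - (p (c : E) : E) = c
    simp [this]
  have hpcE : ∀ y : E', pc (y : E) = 0 := fun y => by
    apply Subtype.ext
    change (y : E) - (p (y : E) : E) = 0
    simp [hp]
  obtain ⟨d⟩ := FC.split_prod E'.subtype p hp
  have hCext : FC.ExtP R C := FC.extP_retract (FC.extP_of_cotorsion hEcot) C.subtype pc hpcC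
  let w : E →ₗ[R] E := E'.subtype ∘ₗ u
  let t : E →ₗ[R] E := q ∘ₗ p
  have htw : ∀ x, t (w x) = x := fun x => by simp [t, w, hp, hq]
  have hpw : ∀ x, pc (w x) = 0 := fun x => hpcE (u x)
  have htc : ∀ c : C, t (c : E) = 0 := fun c => by
    have : p (c : E) = 0 := c.2
    simp [t, this]
  let κ : ℕ → E' →ₗ[R] C := fun n => pc ∘ₗ (t ^ n) ∘ₗ q
  let ι : (ℕ →₀ C) →ₗ[R] E' := Finsupp.lsum ℕ (fun n => u ∘ₗ (w ^ n) ∘ₗ C.subtype)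
  have hι1 : ∀ n c, ι (Finsupp.single n c) = u ((w ^ n) (c : E)) := fun n c => by simp [ι]
  have hκ : ∀ m n (c : C), pc ((t ^ n) ((w ^ m) (c : E))) = if m = n then c else 0 := by
    intro m n
    induction n generalizing m with
    | zero =>
      intro c
      cases m with
      | zero => simp [hpcC]
      | succ m => rw [pow_succ' w]; simp [hpw]
    | succ n ih =>
      intro c
      cases m with
      | zero => rw [pow_succ]; simp [htc]
      | succ m =>
        rw [pow_succ, pow_succ' w]
        simp only [Module.End.mul_apply, htw, ih]
        simp
  have hκι : ∀ n x, κ n (ι x) = x n := by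
    intro n x
    induction x using Finsupp.induction_linear with
    | zero => simp
    | add f g hf hg => simp [hf, hg]
    | single m c =>
      rw [hι1]
      simp only [κ, LinearMap.comp_apply, hq, hκ, Finsupp.single_apply]
  have hpure : IsPureMono R ι := by
    constructor
    · intro x y h
      ext1 n
      rw [← hκι, ← hκι, h]
    · rintro m n r a ⟨y, hy⟩
      let S : Finset ℕ := Finset.univ.biUnion fun i => (a i).support
      let ρ : E' →ₗ[R] (ℕ →₀ C) := ∑ n ∈ S, Finsupp.lsingle n ∘ₗ κ n
      have hρ : ∀ i, ρ (ι (a i)) = a i := fun i => by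
        simp only [ρ, LinearMap.sum_apply, LinearMap.comp_apply, hκι, Finsupp.lsingle_apply]
        have hsub : (a i).support ⊆ S :=
          Finset.subset_biUnion_of_mem (fun i => (a i).support) (Finset.mem_univ i)
        have := Finsupp.sum_of_support_subset (a i) hsub Finsupp.single (fun _ _ => by simp)
        rw [← this, Finsupp.sum_single]
      refine ⟨fun j => ρ (y j), fun i => ?_⟩
      rw [← hρ i, ← hy i, map_sum]
      simp
  obtain ⟨e⟩ := FC.absorb hCext (FC.extP_of_cotorsion hE'cot) ι
    ⟨hpure.1, FC.isFlat_quot _ hpure hE'flat⟩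
  exact ⟨d.trans e⟩
end

section
/- Let R be a ring and let 𝒳 be a class of right R-modules closed under isomorphisms and direct summands such that every right R-module has a monomorphic 𝒳-envelope. If M is an 𝒳-endomorphism invariant right R-module and N is a direct summand of M, then N is 𝒳-endomorphism invariant. -/
/-!
Schröder-Bernstein problem for modules (Guil Asensio, Kaleboğaz, Srivastava).
We formalize "right R-modules" as Lean `Module R` modules (the theory is side-symmetric).
A class of modules is a predicate on modules (in a fixed universe `u`).
-/

universe u

variable (R : Type u) [Ring R]

/-- `M` is `𝒳`-endomorphism invariant: for every monomorphic `𝒳`-envelope `u : M → X`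
and every endomorphism `φ` of `X`, there is an endomorphism `f` of `M` with
`u ∘ f = φ ∘ u`. -/
def IsEndoInvariant (𝒳 : ModClass R) (M : Type u) [AddCommGroup M] [Module R M] : Prop :=
  ∀ (X : Type u) [AddCommGroup X] [Module R X] (u : M →ₗ[R] X),
    Function.Injective u → IsEnvelope R 𝒳 u →
    ∀ φ : X →ₗ[R] X, ∃ f : M →ₗ[R] M, u ∘ₗ f = φ ∘ₗ u

/-- **Lemma 2.6.** A direct summand of an `𝒳`-endomorphism invariant module is
`𝒳`-endomorphism invariant. -/
theorem stmt8 (𝒳 : ModClass R) (hiso : ClosedUnderIsos R 𝒳)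
    (hsum : ClosedUnderSummands R 𝒳) (henv : HasMonoEnvelopes R 𝒳)
    (M : Type u) [AddCommGroup M] [Module R M] (hM : IsEndoInvariant R 𝒳 M)
    (N : Type u) [AddCommGroup N] [Module R N] (hN : IsDirectSummandOf R N M) :
    IsEndoInvariant R 𝒳 N := by
  obtain ⟨i, p, hpi⟩ := hN
  intro Y _ _ v hv hvE φ
  obtain ⟨X, _, _, w, hw, hwE⟩ := henv M
  obtain ⟨a, ha⟩ := hvE.1.2 X hwE.1.1 (w ∘ₗ i)
  obtain ⟨b, hb⟩ := hwE.1.2 Y hvE.1.1 (v ∘ₗ p)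
  have ha' : ∀ n, a (v n) = w (i n) := fun n => LinearMap.congr_fun ha n
  have hb' : ∀ m, b (w m) = v (p m) := fun m => LinearMap.congr_fun hb m
  have hp' : ∀ n, p (i n) = n := fun n => LinearMap.congr_fun hpi n
  have hba : Function.Bijective (b ∘ₗ a) := by
    apply hvE.2
    ext n
    simp [ha', hb', hp']
  let e : Y ≃ₗ[R] Y := LinearEquiv.ofBijective (b ∘ₗ a) hba
  have he : ∀ y, b (a (e.symm y)) = y := fun y => e.apply_symm_apply y
  obtain ⟨g, hg⟩ := hM X w hw hwE (a ∘ₗ e.symm.toLinearMap ∘ₗ φ ∘ₗ b)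
  have hg' : ∀ m, w (g m) = a (e.symm (φ (b (w m)))) := fun m => LinearMap.congr_fun hg m
  refine ⟨p ∘ₗ g ∘ₗ i, ?_⟩
  ext n
  change v (p (g (i n))) = φ (v n)
  rw [← hb', hg', he, hb', hp']
end

section
/- Let R be a ring and let 𝒳 be a class of right R-modules closed under isomorphisms and direct summands such that every right R-module has a monomorphic 𝒳-envelope. Let M and N be 𝒳-endomorphism invariant right R-modules with monomorphic 𝒳-envelopes v_M : M → X(M) and v_N : N → X(N). Assume that N is 𝒳-strongly purely closed and that M is an 𝒳-strongly pure submodule of N. If there exists an 𝒳-strongly pure monomorphism u : N → M, then M ≅ N. -/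
/-!
Schröder-Bernstein problem for modules (Guil Asensio, Kaleboğaz, Srivastava).
We formalize "right R-modules" as Lean `Module R` modules (the theory is side-symmetric).
A class of modules is a predicate on modules (in a fixed universe `u`).
-/

universe u

variable (R : Type u) [Ring R]

theorem aux_prod_mem (𝒳 : ModClass R) (hsum : ClosedUnderSummands R 𝒳)
    (henv : HasMonoEnvelopes R 𝒳) {X Y : Type u} [AddCommGroup X] [Module R X]
    [AddCommGroup Y] [Module R Y] (hX : 𝒳 X) (hY : 𝒳 Y) : 𝒳 (X × Y) := by
  obtain ⟨Z, _, _, v, hv, ⟨⟨hZ, hpre⟩, -⟩⟩ := henv (X × Y)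
  obtain ⟨a, ha⟩ := hpre X hX (LinearMap.fst R X Y)
  obtain ⟨b, hb⟩ := hpre Y hY (LinearMap.snd R X Y)
  refine hsum (X × Y) Z ⟨v, a.prod b, ?_⟩ hZ
  apply LinearMap.ext
  intro x
  exact Prod.ext (LinearMap.congr_fun ha x) (LinearMap.congr_fun hb x)

theorem aux_env_iso (𝒳 : ModClass R) {A B X Y : Type u} [AddCommGroup A] [Module R A]
    [AddCommGroup B] [Module R B] [AddCommGroup X] [Module R X]
    [AddCommGroup Y] [Module R Y] {a : A →ₗ[R] X} {b : B →ₗ[R] Y}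
    (ha : IsEnvelope R 𝒳 a) (hb : IsEnvelope R 𝒳 b) (e : A ≃ₗ[R] B) :
    Nonempty (X ≃ₗ[R] Y) := by
  obtain ⟨h, hh⟩ := ha.1.2 Y hb.1.1 (b ∘ₗ e.toLinearMap)
  obtain ⟨k, hk⟩ := hb.1.2 X ha.1.1 (a ∘ₗ e.symm.toLinearMap)
  have hh' : ∀ x, h (a x) = b (e x) := fun x => LinearMap.congr_fun hh x
  have hk' : ∀ x, k (b x) = a (e.symm x) := fun x => LinearMap.congr_fun hk x
  have h1 := ha.2 (k ∘ₗ h) (by ext x; simp [hh', hk'])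
  have h2 := hb.2 (h ∘ₗ k) (by ext x; simp [hh', hk'])
  rw [LinearMap.coe_comp] at h1 h2
  exact ⟨LinearEquiv.ofBijective h ⟨h1.1.of_comp, h2.2.of_comp⟩⟩

theorem aux_env_pure (𝒳 : ModClass R) {A B X Y : Type u} [AddCommGroup A] [Module R A]
    [AddCommGroup B] [Module R B] [AddCommGroup X] [Module R X]
    [AddCommGroup Y] [Module R Y] {a : A →ₗ[R] X} {b : B →ₗ[R] Y}
    (ha : IsEnvelope R 𝒳 a) (hb : IsEnvelope R 𝒳 b) (w : A →ₗ[R] B)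
    (hw : IsStronglyPureMono R 𝒳 w) :
    ∃ (k : X →ₗ[R] Y) (h : Y →ₗ[R] X), (∀ x, h (k x) = x) ∧ ∀ x, k (a x) = b (w x) := by
  obtain ⟨g, hg⟩ := hw X ha.1.1 a
  obtain ⟨h, hh⟩ := hb.1.2 X ha.1.1 g
  obtain ⟨k, hk⟩ := ha.1.2 Y hb.1.1 (b ∘ₗ w)
  have hg' : ∀ x, g (w x) = a x := fun x => LinearMap.congr_fun hg x
  have hh' : ∀ x, h (b x) = g x := fun x => LinearMap.congr_fun hh x
  have hk' : ∀ x, k (a x) = b (w x) := fun x => LinearMap.congr_fun hk x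
  have h1 := ha.2 (h ∘ₗ k) (by ext x; simp [hh', hk', hg'])
  let e := LinearEquiv.ofBijective (h ∘ₗ k) h1
  exact ⟨k, e.symm.toLinearMap ∘ₗ h, fun x => e.symm_apply_apply x, hk'⟩

theorem aux_env_prod (𝒳 : ModClass R) (hsum : ClosedUnderSummands R 𝒳)
    (henv : HasMonoEnvelopes R 𝒳) {A B X Y : Type u} [AddCommGroup A] [Module R A]
    [AddCommGroup B] [Module R B] [AddCommGroup X] [Module R X]
    [AddCommGroup Y] [Module R Y] {a : A →ₗ[R] X} {b : B →ₗ[R] Y}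
    (ha : IsEnvelope R 𝒳 a) (hb : IsEnvelope R 𝒳 b) :
    IsEnvelope R 𝒳 (a.prodMap b) := by
  refine ⟨⟨aux_prod_mem R 𝒳 hsum henv ha.1.1 hb.1.1, ?_⟩, ?_⟩
  · intro X' _ _ hX' g
    obtain ⟨h, hh⟩ := ha.1.2 X' hX' (g ∘ₗ LinearMap.inl R A B)
    obtain ⟨k, hk⟩ := hb.1.2 X' hX' (g ∘ₗ LinearMap.inr R A B)
    refine ⟨h.coprod k, ?_⟩
    apply LinearMap.prod_ext
    · ext x; simpa using LinearMap.congr_fun hh x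
    · ext x; simpa using LinearMap.congr_fun hk x
  · intro T hT
    have hT' : ∀ x y, T (a x, b y) = (a x, b y) := fun x y => LinearMap.congr_fun hT (x, y)
    let t11 : X →ₗ[R] X := LinearMap.fst R X Y ∘ₗ T ∘ₗ LinearMap.inl R X Y
    let t12 : Y →ₗ[R] X := LinearMap.fst R X Y ∘ₗ T ∘ₗ LinearMap.inr R X Y
    let t21 : X →ₗ[R] Y := LinearMap.snd R X Y ∘ₗ T ∘ₗ LinearMap.inl R X Y
    let t22 : Y →ₗ[R] Y := LinearMap.snd R X Y ∘ₗ T ∘ₗ LinearMap.inr R X Y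
    have hTe : ∀ x y, T (x, y) = (t11 x + t12 y, t21 x + t22 y) := by
      intro x y
      have : ((x, y) : X × Y) = (x, 0) + (0, y) := by simp
      rw [this, map_add]
      rfl
    have e11 : ∀ x, t11 (a x) = a x := fun x => by
      have := hT' x 0
      simp only [map_zero] at this
      exact congrArg Prod.fst this
    have e21 : ∀ x, t21 (a x) = 0 := fun x => by
      have := hT' x 0
      simp only [map_zero] at this
      exact congrArg Prod.snd this
    have e12 : ∀ x, t12 (b x) = 0 := fun x => by
      have := hT' 0 x
      simp only [map_zero] at this
      exact congrArg Prod.fst this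
    have e22 : ∀ x, t22 (b x) = b x := fun x => by
      have := hT' 0 x
      simp only [map_zero] at this
      exact congrArg Prod.snd this
    have b11 := ha.2 t11 (LinearMap.ext e11)
    let e := LinearEquiv.ofBijective t11 b11
    have he : ∀ x, t11 (e.symm x) = x := fun x => e.apply_symm_apply x
    have bs := hb.2 (t22 - t21 ∘ₗ e.symm.toLinearMap ∘ₗ t12)
      (by ext x; simp [e22, e12])
    constructor
    · rw [injective_iff_map_eq_zero]
      rintro ⟨x, y⟩ hxy
      rw [hTe, Prod.mk_eq_zero] at hxy
      obtain ⟨h1, h2⟩ := hxy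
      have hx : x = - e.symm (t12 y) := by
        apply b11.1
        rw [map_neg, he]
        exact eq_neg_of_add_eq_zero_left h1
      have hy : y = 0 := by
        apply (injective_iff_map_eq_zero _).1 bs.1
        rw [hx, map_neg] at h2
        simp only [LinearMap.sub_apply, LinearMap.comp_apply, LinearEquiv.coe_coe]
        rw [← h2]; abel
      subst hy
      simp [hx]
    · rintro ⟨x, y⟩
      obtain ⟨y', hy'⟩ := bs.2 (y - t21 (e.symm x))
      simp only [LinearMap.sub_apply, LinearMap.comp_apply, LinearEquiv.coe_coe] at hy'
      refine ⟨(e.symm x - e.symm (t12 y'), y'), ?_⟩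
      rw [hTe, map_sub, map_sub, he, he]
      ext
      · simp
      · simp only
        rw [← add_left_inj (- t21 (e.symm x)), ← sub_eq_add_neg, ← sub_eq_add_neg, ← hy']
        abel

theorem aux_split (𝒳 : ModClass R) (henv : HasMonoEnvelopes R 𝒳) {A : Type u}
    [AddCommGroup A] [Module R A] (hA : IsEndoInvariant R 𝒳 A) (w : A →ₗ[R] A)
    (hw : IsStronglyPureMono R 𝒳 w) : ∃ f : A →ₗ[R] A, ∀ x, f (w x) = x := by
  obtain ⟨X, _, _, a, hinj, ha⟩ := henv A
  obtain ⟨k, h, hhk, hka⟩ := aux_env_pure R 𝒳 ha ha w hw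
  obtain ⟨f, hf⟩ := hA X a hinj ha h
  refine ⟨f, fun x => hinj ?_⟩
  have := LinearMap.congr_fun hf (w x)
  simp only [LinearMap.comp_apply] at this
  rw [this, ← hka, hhk]

theorem aux_retract {A B : Type u} [AddCommGroup A] [Module R A]
    [AddCommGroup B] [Module R B] (i : A →ₗ[R] B) (p : B →ₗ[R] A) (h : ∀ x, p (i x) = x) :
    Nonempty (B ≃ₗ[R] A × LinearMap.ker p) := by
  have hk : ∀ x, (LinearMap.id - i ∘ₗ p : B →ₗ[R] B) x ∈ LinearMap.ker p := by
    intro x; simp [h]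
  refine ⟨LinearEquiv.ofLinearMap (p.prod (LinearMap.codRestrict _ _ hk))
    (i.coprod (LinearMap.ker p).subtype) ?_ ?_⟩
  · apply LinearMap.ext
    rintro ⟨x, y, hy⟩
    have hy' : p y = 0 := hy
    apply Prod.ext
    · simp [h, hy']
    · apply Subtype.ext
      simp [h, hy']
  · ext x
    simp

theorem aux_pure_comp (𝒳 : ModClass R) {A B C : Type u} [AddCommGroup A] [Module R A]
    [AddCommGroup B] [Module R B] [AddCommGroup C] [Module R C] (f : A →ₗ[R] B)
    (g : B →ₗ[R] C) (hf : IsStronglyPureMono R 𝒳 f) (hg : IsStronglyPureMono R 𝒳 g) :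
    IsStronglyPureMono R 𝒳 (g ∘ₗ f) := by
  intro X _ _ hX φ
  obtain ⟨ψ, hψ⟩ := hf X hX φ
  obtain ⟨χ, hχ⟩ := hg X hX ψ
  exact ⟨χ, by rw [← LinearMap.comp_assoc, hχ, hψ]⟩

/-- The sum of the iterates `w ^ i ∘ ι : H → N` is strongly pure. -/
theorem aux_sum_pure (𝒳 : ModClass R) (N : Type u) [AddCommGroup N] [Module R N]
    (hN : IsStronglyPurelyClosed R 𝒳 N) (H : Type u) [AddCommGroup H] [Module R H]
    (s : H →ₗ[R] N) (π : N →ₗ[R] H) (w r : Module.End R N)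
    (hπs : ∀ x, π (s x) = x) (hπw : ∀ x, π (w x) = 0) (hrs : ∀ x, r (s x) = 0)
    (hrw : ∀ x, r (w x) = x) :
    ∃ j : (ℕ →₀ H) →ₗ[R] N, IsStronglyPureMono R 𝒳 j := by
  classical
  let j : (ℕ →₀ H) →ₗ[R] N := Finsupp.lsum ℕ fun i => (w ^ i) ∘ₗ s
  have hj : ∀ i x, j (Finsupp.single i x) = (w ^ i) (s x) := by
    intro i x; simp [j]
  have hrwi : ∀ i x, (r ^ i) ((w ^ i) x) = x := by
    intro i
    induction i with
    | zero => intro x; rfl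
    | succ i ih =>
      intro x
      rw [pow_succ r, pow_succ' w, Module.End.mul_apply, Module.End.mul_apply, hrw, ih]
  have hkey : ∀ k i x, π ((r ^ k) ((w ^ i) (s x))) = if i = k then x else 0 := by
    intro k i x
    rcases lt_trichotomy i k with h | h | h
    · obtain ⟨d, rfl⟩ := Nat.exists_eq_add_of_lt h
      rw [show i + d + 1 = (d + 1) + i by ring, pow_add r (d + 1) i, Module.End.mul_apply, hrwi,
        pow_succ, Module.End.mul_apply, hrs, if_neg (by omega)]
      simp
    · subst h
      simp [hrwi, hπs]
    · obtain ⟨d, rfl⟩ := Nat.exists_eq_add_of_lt h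
      rw [show k + d + 1 = k + (d + 1) by ring, pow_add w k (d + 1), Module.End.mul_apply, hrwi,
        pow_succ', Module.End.mul_apply, hπw, if_neg (by omega)]
  -- truncated retraction
  let p : ℕ → N →ₗ[R] (ℕ →₀ H) := fun n =>
    ∑ k ∈ Finset.range n, Finsupp.lsingle k ∘ₗ π ∘ₗ (r ^ k)
  have hp : ∀ n x, p n x = ∑ k ∈ Finset.range n, Finsupp.single k (π ((r ^ k) x)) := by
    intro n x; simp [p, LinearMap.sum_apply]
  let S : ℕ → Submodule R (ℕ →₀ H) := fun n => Finsupp.supported H R {i | i < n}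
  have hSmono : ∀ m n, m ≤ n → S m ≤ S n := fun m n h =>
    Finsupp.supported_mono fun i (hi : i < m) => lt_of_lt_of_le hi h
  have hpS : ∀ n x, p n x ∈ S n := by
    intro n x
    rw [hp]
    refine Submodule.sum_mem _ fun k hk => ?_
    exact Finsupp.single_mem_supported R _ (Finset.mem_range.1 hk)
  have hpk : ∀ (x : ℕ →₀ H) (k : ℕ), π ((r ^ k) (j x)) = x k := by
    intro x k
    induction x using Finsupp.induction_linear with
    | zero => simp
    | add f g hf hg => simp [hf, hg]
    | single i y => rw [hj, hkey, Finsupp.single_apply]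
  have hsumS : ∀ n (x : ℕ →₀ H), x ∈ S n →
      ∑ k ∈ Finset.range n, Finsupp.single k (x k) = x := by
    intro n x hx
    have hx' : ∀ i, ¬ i < n → x i = 0 := fun i hi => (Finsupp.mem_supported' R x).1 hx i hi
    ext i
    rw [Finsupp.finset_sum_apply]
    simp only [Finsupp.single_apply, Finset.sum_ite_eq', Finset.mem_range]
    split_ifs with h
    · rfl
    · exact (hx' i h).symm
  have hpj : ∀ n x, x ∈ S n → p n (j x) = x := by
    intro n x hx
    rw [hp]
    simp only [hpk]
    exact hsumS n x hx
  refine ⟨j, ?_⟩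
  intro X _ _ hX f
  let A : ULift.{u} ℕ → Type u := fun n => S n.down
  let B : ULift.{u} ℕ → Type u := fun _ => N
  let _ : ∀ i, AddCommGroup (A i) := fun i => inferInstanceAs (AddCommGroup (S i.down))
  let _ : ∀ i, Module R (A i) := fun i => inferInstanceAs (Module R (S i.down))
  let _ : ∀ i, AddCommGroup (B i) := fun i => inferInstanceAs (AddCommGroup N)
  let _ : ∀ i, Module R (B i) := fun i => inferInstanceAs (Module R N)
  let fA : ∀ i j : ULift.{u} ℕ, i ≤ j → A i →ₗ[R] A j := fun i j h =>
    Submodule.inclusion (hSmono i.down j.down h)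
  let fB : ∀ i j : ULift.{u} ℕ, i ≤ j → B i →ₗ[R] B j := fun i j h =>
    (LinearMap.id : N →ₗ[R] N)
  have : DirectedSystem A fun i j h => fA i j h :=
    ⟨fun i x => rfl, fun i j k h1 h2 x => rfl⟩
  have : DirectedSystem B fun i j h => fB i j h :=
    ⟨fun i x => rfl, fun i j k h1 h2 x => rfl⟩
  have : IsDirected (ULift.{u} ℕ) (· ≤ ·) :=
    ⟨fun a b => ⟨⟨max a.down b.down⟩, le_max_left a.down b.down, le_max_right a.down b.down⟩⟩
  let g : ∀ i, A i →ₗ[R] B i := fun i => j ∘ₗ (S i.down).subtype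
  have hg : ∀ i j h, g j ∘ₗ fA i j h = fB i j h ∘ₗ g i := fun i j h => rfl
  have hAadd : ∀ i, InAdd R N (A i) := by
    rintro ⟨n⟩
    let q : (Fin n → N) →ₗ[R] (ℕ →₀ H) :=
      ∑ k : Fin n, Finsupp.lsingle (k : ℕ) ∘ₗ π ∘ₗ LinearMap.proj k
    have hq : ∀ y, q y = ∑ k : Fin n, Finsupp.single (k : ℕ) (π (y k)) := by
      intro y; simp [q, LinearMap.sum_apply]
    have hqS : ∀ y, q y ∈ S n := by
      intro y
      rw [hq]
      exact Submodule.sum_mem _ fun k _ => Finsupp.single_mem_supported R _ k.2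
    refine ⟨n, (LinearMap.pi fun k : Fin n => s ∘ₗ Finsupp.lapply (k : ℕ)) ∘ₗ (S n).subtype,
      LinearMap.codRestrict (S n) q hqS, ?_⟩
    apply LinearMap.ext
    intro x
    apply Subtype.ext
    change q (fun k : Fin n => s ((x : ℕ →₀ H) k)) = (x : ℕ →₀ H)
    rw [hq]
    simp only [hπs]
    rw [Fin.sum_univ_eq_sum_range (fun k => Finsupp.single k ((x : ℕ →₀ H) k)) n]
    exact hsumS n x x.2
  have hBadd : ∀ i, InAdd R N (B i) := fun i =>
    ⟨1, LinearMap.pi fun _ => (LinearMap.id : N →ₗ[R] N), LinearMap.proj 0, rfl⟩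
  have hpure := hN (ULift.{u} ℕ) A B fA fB hAadd hBadd g hg (by
    rintro ⟨n⟩
    refine ⟨LinearMap.codRestrict (S n) (p n) (hpS n), ?_⟩
    apply LinearMap.ext
    intro x
    apply Subtype.ext
    exact hpj n x x.2)
  let F : Module.DirectLimit A fA →ₗ[R] X :=
    Module.DirectLimit.lift R (ULift.{u} ℕ) A fA (fun i => f ∘ₗ (S i.down).subtype)
      (fun i j h x => rfl)
  obtain ⟨G, hG⟩ := hpure X hX F
  refine ⟨G ∘ₗ Module.DirectLimit.of R (ULift.{u} ℕ) B fB ⟨0⟩, ?_⟩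
  apply LinearMap.ext
  intro x
  obtain ⟨n, hn⟩ : ∃ n, x ∈ S n := by
    refine ⟨x.support.sup id + 1, ?_⟩
    rw [Finsupp.mem_supported]
    intro i hi
    exact Nat.lt_succ_of_le (Finset.le_sup (f := id) hi)
  have h1 := LinearMap.congr_fun hG
    (Module.DirectLimit.of R (ULift.{u} ℕ) A fA ⟨n⟩ (⟨x, hn⟩ : S n))
  have h2 : Module.DirectLimit.of R (ULift.{u} ℕ) B fB ⟨n⟩ (fB ⟨0⟩ ⟨n⟩ (Nat.zero_le n) (j x)) =
      Module.DirectLimit.of R (ULift.{u} ℕ) B fB ⟨0⟩ (j x) :=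
    Module.DirectLimit.of_f (hij := show (⟨0⟩ : ULift.{u} ℕ) ≤ ⟨n⟩ from Nat.zero_le n)
  rw [LinearMap.comp_apply, Module.DirectLimit.map_apply_of] at h1
  have h3 : F (Module.DirectLimit.of R (ULift.{u} ℕ) A fA ⟨n⟩ (⟨x, hn⟩ : S n)) = f x :=
    Module.DirectLimit.lift_of _ _ _
  change G (Module.DirectLimit.of R (ULift.{u} ℕ) B fB ⟨0⟩ (j x)) = f x
  rw [← h2]
  exact h1.trans h3

theorem aux_finsupp_succ (H : Type u) [AddCommGroup H] [Module R H] :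
    Nonempty ((ℕ →₀ H) ≃ₗ[R] (ℕ →₀ H) × H) := by
  let e1 : (ℕ →₀ H) ≃ₗ[R] (ℕ ⊕ PUnit.{1} →₀ H) :=
    Finsupp.domLCongr Equiv.natSumPUnitEquivNat.symm
  let e2 : (ℕ ⊕ PUnit.{1} →₀ H) ≃ₗ[R] (ℕ →₀ H) × (PUnit.{1} →₀ H) :=
    Finsupp.sumFinsuppLEquivProdFinsupp R
  let e3 : (PUnit.{1} →₀ H) ≃ₗ[R] H := Finsupp.LinearEquiv.finsuppUnique R H PUnit
  exact ⟨e1.trans (e2.trans ((LinearEquiv.refl R _).prodCongr e3))⟩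

/-- **Theorem 2.7.** Let `M, N` be `𝒳`-endomorphism invariant modules, with `N`
`𝒳`-strongly purely closed and `M` an `𝒳`-strongly pure submodule of `N`. If there is an
`𝒳`-strongly pure monomorphism `u : N → M`, then `M ≅ N`. -/
theorem stmt9 (𝒳 : ModClass R) (hiso : ClosedUnderIsos R 𝒳)
    (hsum : ClosedUnderSummands R 𝒳) (henv : HasMonoEnvelopes R 𝒳)
    (N : Type u) [AddCommGroup N] [Module R N] (hNinv : IsEndoInvariant R 𝒳 N)
    (hNclosed : IsStronglyPurelyClosed R 𝒳 N)
    (M : Submodule R N) (hMinv : IsEndoInvariant R 𝒳 M)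
    (hMpure : IsStronglyPureMono R 𝒳 M.subtype)
    (u : N →ₗ[R] M) (hu : IsStronglyPureMono R 𝒳 u) :
    Nonempty (M ≃ₗ[R] N) := by
  have pNN := aux_pure_comp R 𝒳 u M.subtype hu hMpure
  have pMM := aux_pure_comp R 𝒳 M.subtype u hMpure hu
  obtain ⟨f0, hf0⟩ := aux_split R 𝒳 henv hNinv _ pNN
  obtain ⟨q0, hq0⟩ := aux_split R 𝒳 henv hMinv _ pMM
  let f : M →ₗ[R] N := f0 ∘ₗ M.subtype
  let q : N →ₗ[R] M := q0 ∘ₗ u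
  have hf : ∀ x, f (u x) = x := hf0
  have hq : ∀ x : M, q (M.subtype x) = x := hq0
  let H := LinearMap.ker q
  obtain ⟨eN⟩ := aux_retract R M.subtype q hq
  have hk : ∀ x, (LinearMap.id - M.subtype ∘ₗ q : N →ₗ[R] N) x ∈ H := by
    intro x
    change q (x - M.subtype (q x)) = 0
    rw [map_sub, hq, sub_self]
  obtain ⟨j, hj⟩ := aux_sum_pure R 𝒳 N hNclosed H H.subtype (LinearMap.codRestrict H _ hk)
    (M.subtype ∘ₗ u) (f ∘ₗ q)
    (by
      rintro ⟨x, hx⟩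
      apply Subtype.ext
      have hx' : q x = 0 := hx
      change x - M.subtype (q x) = x
      rw [hx', map_zero, sub_zero])
    (by
      intro x
      apply Subtype.ext
      change M.subtype (u x) - M.subtype (q (M.subtype (u x))) = 0
      rw [hq, sub_self])
    (by
      rintro ⟨x, hx⟩
      have hx' : q x = 0 := hx
      change f (q x) = 0
      rw [hx', map_zero])
    (by
      intro x
      change f (q (M.subtype (u x))) = x
      rw [hq, hf])
  have hj' := aux_pure_comp R 𝒳 j u hj hu
  obtain ⟨XM, _, _, vM, iM, envM⟩ := henv M
  obtain ⟨XN, _, _, vN, iN, envN⟩ := henv N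
  obtain ⟨XH, _, _, vH, iH, envH⟩ := henv H
  obtain ⟨XP, _, _, vP, iP, envP⟩ := henv (ℕ →₀ H)
  obtain ⟨kP, hP, hkP, -⟩ := aux_env_pure R 𝒳 envP envM _ hj'
  obtain ⟨e1⟩ := aux_retract R kP hP hkP
  obtain ⟨e2⟩ := aux_env_iso R 𝒳 envN (aux_env_prod R 𝒳 hsum henv envM envH) eN
  obtain ⟨eP⟩ := aux_finsupp_succ R H
  obtain ⟨e3⟩ := aux_env_iso R 𝒳 envP (aux_env_prod R 𝒳 hsum henv envP envH) eP
  let E := LinearMap.ker hP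
  let e4 : ((XP × E) × XH) ≃ₗ[R] (XP × XH) × E :=
    (LinearEquiv.prodAssoc R XP E XH).trans
      (((LinearEquiv.refl R XP).prodCongr (LinearEquiv.prodComm R E XH)).trans
        (LinearEquiv.prodAssoc R XP XH E).symm)
  let φ : XN ≃ₗ[R] XM :=
    e2.trans ((e1.prodCongr (LinearEquiv.refl R XH)).trans
      (e4.trans ((e3.symm.prodCongr (LinearEquiv.refl R E)).trans e1.symm)))
  obtain ⟨k1, h1, hk1, hv1⟩ := aux_env_pure R 𝒳 envM envN _ hMpure
  obtain ⟨k2, h2, hk2, hv2⟩ := aux_env_pure R 𝒳 envN envM _ hu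
  obtain ⟨a, ha⟩ := hNinv XN vN iN envN (φ.symm.toLinearMap ∘ₗ h1)
  obtain ⟨b, hb⟩ := hMinv XM vM iM envM (φ.toLinearMap ∘ₗ h2)
  have ha' : ∀ x : M, vN (a (M.subtype x)) = φ.symm (vM x) := by
    intro x
    have := LinearMap.congr_fun ha (M.subtype x)
    simp only [LinearMap.comp_apply, LinearEquiv.coe_coe] at this
    rw [this, ← hv1, hk1]
  have hb' : ∀ x : N, vM (b (u x)) = φ (vN x) := by
    intro x
    have := LinearMap.congr_fun hb (u x)
    simp only [LinearMap.comp_apply, LinearEquiv.coe_coe] at this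
    rw [this, ← hv2, hk2]
  refine ⟨LinearEquiv.ofLinearMap (a ∘ₗ M.subtype) (b ∘ₗ u) ?_ ?_⟩
  · apply LinearMap.ext
    intro x
    apply iN
    change vN (a (M.subtype (b (u x)))) = vN x
    rw [ha', hb', LinearEquiv.symm_apply_apply]
  · apply LinearMap.ext
    intro x
    apply iM
    change vM (b (u (a (M.subtype x)))) = vM x
    rw [hb', ha', LinearEquiv.apply_symm_apply]
end

section
/- Let R be a ring and let M and N be quasi-injective right R-modules. If there is an injective R-linear map from M to N and an injective R-linear map from N to M, then M ≅ N. -/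
/-!
Bumby's theorem for quasi-injective modules (Corollary 2.8(1)). "Right R-modules" are
formalized as Lean `Module R` modules (the theory is side-symmetric).
-/

universe u

variable (R : Type u) [Ring R]

/-- `N` is an essential submodule of `E`: every nonzero submodule of `E` meets `N`
nontrivially. -/
def IsEssentialSubmodule {E : Type u} [AddCommGroup E] [Module R E]
    (N : Submodule R E) : Prop :=
  ∀ K : Submodule R E, K ⊓ N = ⊥ → K = ⊥

/-- `u : M → E` realizes `E` as an injective envelope of `M`: `E` is injective and `u`
embeds `M` as an essential submodule of `E`. -/
def IsInjectiveEnvelope (M E : Type u) [AddCommGroup M] [Module R M]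
    [AddCommGroup E] [Module R E] (u : M →ₗ[R] E) : Prop :=
  IsInjectiveModule R E ∧ Function.Injective u ∧
    IsEssentialSubmodule R (LinearMap.range u)

/-- `M` is quasi-injective: `M` (viewed inside an injective envelope `E(M)`) satisfies
`φ(M) ⊆ M` for every endomorphism `φ` of `E(M)`. -/
def IsQuasiInjective (M : Type u) [AddCommGroup M] [Module R M] : Prop :=
  ∃ (E : Type u) (_ : AddCommGroup E) (_ : Module R E) (u : M →ₗ[R] E),
    IsInjectiveEnvelope R M E u ∧
    ∀ φ : E →ₗ[R] E, ∀ x : M, φ (u x) ∈ LinearMap.range u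

section Helpers

variable {R}
variable {E F W : Type u} [AddCommGroup E] [Module R E] [AddCommGroup F] [Module R F]
  [AddCommGroup W] [Module R W]

/-- A map that is injective on an essential submodule is injective. -/
theorem injective_of_essential (i : W →ₗ[R] E) (hi : IsEssentialSubmodule R (LinearMap.range i))
    (h : E →ₗ[R] F) (hh : Function.Injective (h ∘ₗ i)) : Function.Injective h := by
  rw [← LinearMap.ker_eq_bot]
  apply hi
  rw [eq_bot_iff]
  rintro _ ⟨hx, ⟨w, rfl⟩⟩
  have h1 : (h ∘ₗ i) w = (h ∘ₗ i) 0 := by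
    rw [map_zero]
    exact hx
  rw [hh h1]
  simp

/-- Two injective modules with a common essential submodule are isomorphic. -/
theorem equiv_of_essential (hE : IsInjectiveModule R E) (hF : IsInjectiveModule R F)
    (i : W →ₗ[R] E) (j : W →ₗ[R] F) (hi : Function.Injective i) (hj : Function.Injective j)
    (ei : IsEssentialSubmodule R (LinearMap.range i))
    (ej : IsEssentialSubmodule R (LinearMap.range j)) : Nonempty (E ≃ₗ[R] F) := by
  obtain ⟨h, hh⟩ := hF W E i hi j
  have hinj : Function.Injective h := injective_of_essential i ei h (by rw [hh]; exact hj)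
  obtain ⟨q, hq⟩ := hE E F h hinj LinearMap.id
  have hqj : q ∘ₗ j = i := by
    rw [← hh, ← LinearMap.comp_assoc, hq, LinearMap.id_comp]
  have qinj : Function.Injective q := injective_of_essential j ej q (by rw [hqj]; exact hi)
  refine ⟨LinearEquiv.ofBijective h ⟨hinj, fun y => ⟨q y, qinj ?_⟩⟩⟩
  exact LinearMap.congr_fun hq (q y)

/-- Existence of pseudo-complements. -/
theorem exists_pseudo_complement (A : Submodule R F) :
    ∃ K : Submodule R F, Disjoint A K ∧ IsEssentialSubmodule R (A ⊔ K) := by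
  obtain ⟨K, hK⟩ := zorn_le₀ {K : Submodule R F | Disjoint A K} (by
    intro c hc hchain
    refine ⟨sSup c, ?_, fun z hz => le_sSup hz⟩
    exact (DirectedOn.disjoint_sSup_right hchain.directedOn).2 (fun b hb => hc hb))
  refine ⟨K, hK.prop, fun S hS => ?_⟩
  have hd : Disjoint (A ⊔ K) S := (disjoint_iff.2 hS).symm
  have h1 : Disjoint A (K ⊔ S) :=
    Disjoint.disjoint_sup_right_of_disjoint_sup_left hK.prop hd
  have h2 : K ⊔ S ≤ K := hK.le_of_ge h1 le_sup_left
  have h3 : S ≤ A ⊔ K := (le_sup_right.trans h2).trans le_sup_right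
  rwa [inf_eq_left.2 h3] at hS

/-- Bumby's theorem for injective modules. -/
theorem bumby_injective (hE : IsInjectiveModule R E) (hF : IsInjectiveModule R F)
    (a : E →ₗ[R] F) (ha : Function.Injective a) (b : F →ₗ[R] E) (hb : Function.Injective b) :
    Nonempty (E ≃ₗ[R] F) := by
  obtain ⟨r, hr⟩ := hF F E b hb LinearMap.id
  have hrb : ∀ y, r (b y) = y := fun y => LinearMap.congr_fun hr y
  obtain ⟨X, hX⟩ : ∃ X : Submodule R E, LinearMap.ker r ⊔ X.map (b ∘ₗ a) = X :=
    ⟨_, OrderHom.map_lfp (α := Submodule R E) ⟨fun X => LinearMap.ker r ⊔ X.map (b ∘ₗ a),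
      fun X Y h => sup_le_sup_left (Submodule.map_mono h) _⟩⟩
  obtain ⟨K, hK, eK⟩ := exists_pseudo_complement (X.map a)
  have hK0 : ∀ x ∈ X, ∀ k ∈ K, a x = k → x = 0 ∧ k = 0 := by
    intro x hx k hk h
    have : k = 0 := Submodule.disjoint_def.1 hK k ⟨x, hx, h⟩ hk
    subst this
    exact ⟨ha (by rw [h, map_zero]), rfl⟩
  have hrX : ∀ x ∈ X, ∃ x' ∈ X, r x = a x' := by
    intro x hx
    rw [← hX] at hx
    obtain ⟨c, hc, _, ⟨x', hx', rfl⟩, rfl⟩ := Submodule.mem_sup.1 hx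
    refine ⟨x', hx', ?_⟩
    rw [map_add, LinearMap.mem_ker.1 hc, zero_add]
    exact hrb _
  let i : (X × K) →ₗ[R] E := LinearMap.coprod X.subtype (b ∘ₗ K.subtype)
  let j : (X × K) →ₗ[R] F := LinearMap.coprod (a ∘ₗ X.subtype) K.subtype
  have ival : ∀ x k, i (x, k) = x + b k := fun x k => by simp [i]
  have jval : ∀ x k, j (x, k) = a x + k := fun x k => by simp [j]
  have hi : Function.Injective i := by
    rw [injective_iff_map_eq_zero]
    rintro ⟨⟨x, hx⟩, ⟨k, hk⟩⟩ h
    rw [ival] at h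
    simp only at h
    obtain ⟨x', hx', e⟩ := hrX x hx
    have h1 : r (x + b k) = 0 := by rw [h, map_zero]
    rw [map_add, hrb, e] at h1
    obtain ⟨-, h2⟩ := hK0 x' hx' (-k) (K.neg_mem hk) (eq_neg_of_add_eq_zero_left h1)
    have h3 : k = 0 := neg_eq_zero.1 h2
    subst h3
    have h4 : x = 0 := by simpa using h
    subst h4
    rfl
  have hj : Function.Injective j := by
    rw [injective_iff_map_eq_zero]
    rintro ⟨⟨x, hx⟩, ⟨k, hk⟩⟩ h
    rw [jval] at h
    obtain ⟨h1, h2⟩ := hK0 x hx (-k) (K.neg_mem hk) (eq_neg_of_add_eq_zero_left h)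
    have h3 : k = 0 := neg_eq_zero.1 h2
    subst h3
    subst h1
    rfl
  have hjr : X.map a ⊔ K ≤ LinearMap.range j := by
    refine sup_le ?_ ?_
    · rintro _ ⟨x, hx, rfl⟩
      exact ⟨(⟨x, hx⟩, 0), by rw [jval]; simp⟩
    · intro k hk
      exact ⟨(0, ⟨k, hk⟩), by rw [jval]; simp⟩
  have hir : (X.map a ⊔ K).comap r ≤ LinearMap.range i := by
    intro e he
    obtain ⟨_, ⟨x, hx, rfl⟩, k, hk, h⟩ := Submodule.mem_sup.1 (Submodule.mem_comap.1 he)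
    have hc : e - b (r e) ∈ LinearMap.ker r := by
      rw [LinearMap.mem_ker, map_sub, hrb, sub_self]
    have hx2 : (e - b (r e)) + b (a x) ∈ X := by
      rw [← hX]
      exact Submodule.add_mem_sup hc ⟨x, hx, rfl⟩
    refine ⟨(⟨_, hx2⟩, ⟨k, hk⟩), ?_⟩
    rw [ival]
    simp only [← h, map_add]
    abel
  have mono : ∀ {G : Type u} [AddCommGroup G] [Module R G] {A B : Submodule R G}, A ≤ B →
      IsEssentialSubmodule R A → IsEssentialSubmodule R B := by
    intro G _ _ A B hAB hA S hS
    exact hA S (eq_bot_iff.2 ((inf_le_inf_left S hAB).trans hS.le))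
  refine equiv_of_essential hE hF i j hi hj (mono hir ?_) (mono hjr eK)
  intro S hS
  have h1 : S.map r = ⊥ := by
    apply eK
    rw [eq_bot_iff]
    rintro _ ⟨⟨s, hs, rfl⟩, ht⟩
    have : s ∈ (⊥ : Submodule R E) := by
      rw [← hS]
      exact ⟨hs, ht⟩
    rw [Submodule.mem_bot] at this
    simp [this]
  have h2 : S ≤ (X.map a ⊔ K).comap r := by
    rw [← Submodule.map_le_iff_le_comap, h1]
    exact bot_le
  rwa [inf_eq_left.2 h2] at hS

/-- Any map between the envelopes sends `M` into `N`, if `M` embeds in `N`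
and `N` is fully invariant. -/
theorem maps_into {M N : Type u} [AddCommGroup M] [Module R M] [AddCommGroup N] [Module R N]
    (u : M →ₗ[R] E) (v : N →ₗ[R] F) (hF : IsInjectiveModule R F)
    (hv : ∀ φ : F →ₗ[R] F, ∀ x : N, φ (v x) ∈ LinearMap.range v)
    (f : M →ₗ[R] N) (a : E →ₗ[R] F) (ha : Function.Injective a) (haf : a ∘ₗ u = v ∘ₗ f)
    (h : E →ₗ[R] F) (x : M) : h (u x) ∈ LinearMap.range v := by
  obtain ⟨φ, hφ⟩ := hF E F a ha h
  rw [← hφ]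
  have := LinearMap.congr_fun haf x
  simp only [LinearMap.comp_apply] at this ⊢
  rw [this]
  exact hv φ _

end Helpers

/-- If `M` and `N` are quasi-injective and there are injective `R`-linear maps `M → N` and
`N → M`, then `M ≅ N`. -/
theorem stmt10 (M N : Type u) [AddCommGroup M] [Module R M] [AddCommGroup N] [Module R N]
    (hM : IsQuasiInjective R M) (hN : IsQuasiInjective R N)
    (f : M →ₗ[R] N) (hf : Function.Injective f)
    (g : N →ₗ[R] M) (hg : Function.Injective g) :
    Nonempty (M ≃ₗ[R] N) := by
  obtain ⟨E, _, _, u, ⟨hE, hu, eu⟩, qu⟩ := hM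
  obtain ⟨F, _, _, v, ⟨hF, hv, ev⟩, qv⟩ := hN
  obtain ⟨a, haf⟩ := hF M E u hu (v ∘ₗ f)
  obtain ⟨b, hbg⟩ := hE N F v hv (u ∘ₗ g)
  have ha : Function.Injective a :=
    injective_of_essential u eu a (by rw [haf]; exact hv.comp hf)
  have hb : Function.Injective b :=
    injective_of_essential v ev b (by rw [hbg]; exact hu.comp hg)
  obtain ⟨h⟩ := bumby_injective hE hF a ha b hb
  have h1 : ∀ x, h (u x) ∈ LinearMap.range v :=
    maps_into u v hF qv f a ha haf h.toLinearMap
  have h2 : ∀ y, h.symm (v y) ∈ LinearMap.range u :=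
    maps_into v u hE qu g b hb hbg h.symm.toLinearMap
  have h3 : (LinearMap.range u).map h.toLinearMap = LinearMap.range v := by
    apply le_antisymm
    · rintro _ ⟨_, ⟨x, rfl⟩, rfl⟩
      exact h1 x
    · rintro _ ⟨y, rfl⟩
      exact ⟨h.symm (v y), h2 y, h.apply_symm_apply _⟩
  exact ⟨(LinearEquiv.ofInjective u hu).trans
    ((h.submoduleMap (LinearMap.range u)).trans
      ((LinearEquiv.ofEq _ _ h3).trans (LinearEquiv.ofInjective v hv).symm))⟩
end

section
/- Let R be a ring and let M and N be pure-quasi-injective right R-modules. If there is a pure monomorphism from M to N and a pure monomorphism from N to M, then M ≅ N. -/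
/-!
Corollary 2.8(2): Schröder–Bernstein for pure-quasi-injective modules.
"Right R-modules" are formalized as Lean `Module R` modules (the theory is
side-symmetric).
-/

universe u

variable (R : Type u) [Ring R]

/-- `u : M → P` is a pure-injective envelope of `M`: `u` is a pure monomorphism into a
pure-injective module `P`, every homomorphism from `M` to a pure-injective module factors
through `u`, and every endomorphism `h` of `P` with `h ∘ u = u` is an automorphism. -/
def IsPureInjectiveEnvelope (M P : Type u) [AddCommGroup M] [Module R M]
    [AddCommGroup P] [Module R P] (u : M →ₗ[R] P) : Prop :=
  IsPureMono R u ∧ IsPureInjective R P ∧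
    (∀ (Q : Type u) [AddCommGroup Q] [Module R Q], IsPureInjective R Q →
      ∀ f : M →ₗ[R] Q, ∃ g : P →ₗ[R] Q, g ∘ₗ u = f) ∧
    (∀ h : P →ₗ[R] P, h ∘ₗ u = u → Function.Bijective h)

/-- `M` is pure-quasi-injective (invariant under endomorphisms of its pure-injective
envelope): for a pure-injective envelope `u : M → P` and every endomorphism `φ` of `P`,
there is an endomorphism `f` of `M` with `u ∘ f = φ ∘ u`. -/
def IsPureQuasiInjective (M : Type u) [AddCommGroup M] [Module R M] : Prop :=
  ∃ (P : Type u) (_ : AddCommGroup P) (_ : Module R P) (u : M →ₗ[R] P),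
    IsPureInjectiveEnvelope R M P u ∧
    ∀ φ : P →ₗ[R] P, ∃ f : M →ₗ[R] M, u ∘ₗ f = φ ∘ₗ u


section Aux

/-- Algebraic compactness of pure-injective modules. -/
theorem pinj_compact {Q W : Type u} [AddCommGroup Q] [Module R Q] [AddCommGroup W] [Module R W]
    (hQ : IsPureInjective R Q) {ι : Type*} (E : ι → Set (W × Q))
    (hE : ∀ F : Finset ι, ∃ φ : W →ₗ[R] Q, ∀ i ∈ F, ∀ x ∈ E i, φ x.1 = x.2) :
    ∃ φ : W →ₗ[R] Q, ∀ i, ∀ x ∈ E i, φ x.1 = x.2 := by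
  classical
  let B : Set (Q × W) := {z | ∃ i, ∃ x ∈ E i, z = (-x.2, x.1)}
  let K : Submodule R (Q × W) := Submodule.span R B
  -- finitely many elements of `K` are killed by a single map of the right form
  have key1 : ∀ z ∈ K, ∃ F : Finset ι, ∀ φ : W →ₗ[R] Q,
      (∀ i ∈ F, ∀ x ∈ E i, φ x.1 = x.2) → z.1 + φ z.2 = 0 := by
    intro z hz
    induction hz using Submodule.span_induction with
    | mem z hz =>
      obtain ⟨i, x, hx, rfl⟩ := hz
      refine ⟨{i}, fun φ h => ?_⟩
      simp [h i (by simp) x hx]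
    | zero => exact ⟨∅, fun φ _ => by simp⟩
    | add a b _ _ ha hb =>
      obtain ⟨F, hF⟩ := ha
      obtain ⟨G, hG⟩ := hb
      refine ⟨F ∪ G, fun φ h => ?_⟩
      have h1 := hF φ (fun i hi => h i (Finset.mem_union_left _ hi))
      have h2 := hG φ (fun i hi => h i (Finset.mem_union_right _ hi))
      have : (a + b).1 + φ (a + b).2 = (a.1 + φ a.2) + (b.1 + φ b.2) := by
        simp only [Prod.fst_add, Prod.snd_add, map_add]; abel
      rw [this, h1, h2, add_zero]
    | smul r a _ ha =>
      obtain ⟨F, hF⟩ := ha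
      refine ⟨F, fun φ h => ?_⟩
      have : (r • a).1 + φ (r • a).2 = r • (a.1 + φ a.2) := by simp
      rw [this, hF φ h, smul_zero]
  have key : ∀ (m : ℕ) (z : Fin m → Q × W), (∀ i, z i ∈ K) →
      ∃ φ : W →ₗ[R] Q, ∀ i, (z i).1 + φ (z i).2 = 0 := by
    intro m z hz
    choose F hF using fun i => key1 (z i) (hz i)
    obtain ⟨φ, hφ⟩ := hE (Finset.univ.biUnion F)
    exact ⟨φ, fun i => hF i φ fun j hj =>
      hφ j (Finset.mem_biUnion.2 ⟨i, Finset.mem_univ _, hj⟩)⟩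
  let ι₀ : Q →ₗ[R] (Q × W) ⧸ K := K.mkQ ∘ₗ LinearMap.inl R Q W
  have hpure : IsPureMono R ι₀ := by
    refine ⟨?_, ?_⟩
    · rw [injective_iff_map_eq_zero]
      intro q hq
      have hq' : ((q, 0) : Q × W) ∈ K := by
        simpa [ι₀] using hq
      obtain ⟨φ, hφ⟩ := key 1 (fun _ => (q, 0)) (fun _ => hq')
      simpa using hφ 0
    · rintro m n r a ⟨y, hy⟩
      choose w hw using fun j => K.mkQ_surjective (y j)
      have hz : ∀ i, (∑ j, r i j • w j) - (a i, 0) ∈ K := by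
        intro i
        rw [← Submodule.Quotient.mk_eq_zero, ← Submodule.mkQ_apply, map_sub, map_sum]
        simp only [map_smul, hw, hy]
        simp [ι₀]
      obtain ⟨φ, hφ⟩ := key m _ hz
      refine ⟨fun j => (w j).1 + φ (w j).2, fun i => ?_⟩
      have h := hφ i
      simp only [Prod.fst_sub, Prod.snd_sub, Prod.fst_sum, Prod.snd_sum, Prod.smul_fst,
        Prod.smul_snd, map_sub, map_sum, map_smul, map_zero, sub_zero] at h
      simp only [smul_add, Finset.sum_add_distrib]
      rw [← sub_eq_zero, ← h]; abel
  obtain ⟨g, hg⟩ := hQ _ _ ι₀ hpure LinearMap.id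
  refine ⟨g ∘ₗ K.mkQ ∘ₗ LinearMap.inr R Q W, fun i x hx => ?_⟩
  have h0 : K.mkQ (-x.2, x.1) = 0 := by
    rw [Submodule.mkQ_apply, Submodule.Quotient.mk_eq_zero]
    exact Submodule.subset_span ⟨i, x, hx, rfl⟩
  have h1 : g (K.mkQ (x.2, 0)) = x.2 := LinearMap.congr_fun hg x.2
  have h2 : ((0, x.1) : Q × W) = (-x.2, x.1) + (x.2, 0) := by simp
  change g (K.mkQ (0, x.1)) = x.2
  rw [h2, map_add, h0, zero_add, h1]

theorem chain_finset_top {α : Type*} {r : α → α → Prop}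
    (trans : ∀ {a b c}, r a b → r b c → r a c) {c : Set α} (hc : IsChain r c)
    (F : Finset c) (hF : F.Nonempty) : ∃ j ∈ F, ∀ i ∈ F, i = j ∨ r i j := by
  classical
  induction hF using Finset.Nonempty.cons_induction with
  | singleton a => exact ⟨a, by simp, by simp⟩
  | cons a s ha hs ih =>
    obtain ⟨j, hj, h⟩ := ih
    have hne : (a : α) ≠ j := fun h => ha (by rw [Subtype.ext h]; exact hj)
    rcases hc a.2 j.2 hne with h1 | h1
    · refine ⟨j, by simp [hj], fun i hi => ?_⟩
      rcases Finset.mem_cons.1 hi with rfl | hi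
      · exact Or.inr h1
      · exact h i hi
    · refine ⟨a, by simp, fun i hi => ?_⟩
      rcases Finset.mem_cons.1 hi with rfl | hi
      · exact Or.inl rfl
      · rcases h i hi with rfl | h2
        · exact Or.inr h1
        · exact Or.inr (trans h2 h1)

/-- endomorphisms fixing `Y` pointwise -/
def fixMonoid (Q : Type u) [AddCommGroup Q] [Module R Q] (Y : Set Q) :
    Submonoid (Module.End R Q) where
  carrier := {t | ∀ y ∈ Y, t y = y}
  one_mem' := fun y _ => rfl
  mul_mem' := fun {a b} ha hb y hy => by
    rw [Module.End.mul_apply, hb y hy, ha y hy]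

theorem exists_min_idem {Q : Type u} [AddCommGroup Q] [Module R Q]
    (hQ : IsPureInjective R Q) (Y : Set Q) :
    ∃ e : fixMonoid R Q Y, e * e = e ∧ ∀ t, ∃ s, s * (t * e) = e := by
  classical
  have step1 : ∃ m : fixMonoid R Q Y, ∀ t, ∃ s, s * (t * m) = m := by
    let r : fixMonoid R Q Y → fixMonoid R Q Y → Prop := fun a b => ∃ t, b = t * a
    have trans : ∀ {a b c}, r a b → r b c → r a c := by
      rintro a b c ⟨t, rfl⟩ ⟨s, rfl⟩
      exact ⟨s * t, by rw [mul_assoc]⟩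
    obtain ⟨m, hm⟩ := exists_maximal_of_chains_bounded (r := r) (fun c hc => by
      rcases c.eq_empty_or_nonempty with rfl | ⟨x₀, hx₀⟩
      · exact ⟨1, by simp⟩
      let E : c → Set ((Q × (c →₀ Q)) × Q) := fun i =>
        {p | ∃ y ∈ Y, p = ((y, 0), y)} ∪ {p | ∃ y ∈ Y, p = ((0, Finsupp.single i y), y)} ∪
        {p | ∃ q : Q, p = ((q, - Finsupp.single i (i.1.1 q)), 0)}
      obtain ⟨φ, hφ⟩ := pinj_compact R hQ E (fun F => by
        rcases F.eq_empty_or_nonempty with rfl | hF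
        · exact ⟨0, by simp⟩
        obtain ⟨j, hj, hjF⟩ := chain_finset_top (r := r) trans hc F hF
        have : ∀ i : c, ∃ t : fixMonoid R Q Y, i ∈ F → j.1 = t * i.1 := by
          intro i
          by_cases hi : i ∈ F
          · rcases hjF i hi with rfl | ⟨t, ht⟩
            · exact ⟨1, fun _ => by simp⟩
            · exact ⟨t, fun _ => ht⟩
          · exact ⟨1, fun h => absurd h hi⟩
        choose t ht using this
        refine ⟨LinearMap.coprod j.1.1 (Finsupp.lsum ℕ (fun i => ((t i).1 : Q →ₗ[R] Q))), ?_⟩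
        rintro i hi x ((⟨y, hy, rfl⟩ | ⟨y, hy, rfl⟩) | ⟨q, rfl⟩)
        · simpa using j.1.2 y hy
        · simpa using (t i).2 y hy
        · have h := LinearMap.congr_fun (congrArg Subtype.val (ht i hi)) q
          simp only [LinearMap.coprod_apply, map_neg, Finsupp.lsum_single]
          rw [h]
          simp)
      let z : fixMonoid R Q Y := ⟨φ ∘ₗ LinearMap.inl R Q (c →₀ Q), fun y hy =>
        hφ ⟨x₀, hx₀⟩ _ (Or.inl (Or.inl ⟨y, hy, rfl⟩))⟩
      refine ⟨z, fun a ha => ?_⟩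
      refine ⟨⟨φ ∘ₗ LinearMap.inr R Q (c →₀ Q) ∘ₗ Finsupp.lsingle ⟨a, ha⟩, fun y hy =>
        hφ ⟨a, ha⟩ _ (Or.inl (Or.inr ⟨y, hy, rfl⟩))⟩, ?_⟩
      apply Subtype.ext
      refine LinearMap.ext fun q => ?_
      have h := hφ ⟨a, ha⟩ _ (Or.inr ⟨q, rfl⟩)
      have h2 : ((q, - Finsupp.single ⟨a, ha⟩ (a.1 q)) : Q × (c →₀ Q))
        = (q, 0) - (0, Finsupp.single ⟨a, ha⟩ (a.1 q)) := by simp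
      rw [h2, map_sub, sub_eq_zero] at h
      exact h) trans
    refine ⟨m, fun t => ?_⟩
    obtain ⟨s, hs⟩ := hm (t * m) ⟨t, rfl⟩
    exact ⟨s, hs.symm⟩
  obtain ⟨m, hm⟩ := step1
  let L := {x : fixMonoid R Q Y // ∃ t, x = t * m}
  have hL : ∀ x : L, ∃ y : L, y.1 * x.1 = x.1 := by
    rintro ⟨x, t, rfl⟩
    obtain ⟨s, hs⟩ := hm (m * t)
    refine ⟨⟨t * s * m, t * s, rfl⟩, ?_⟩
    change t * s * m * (t * m) = t * m
    simp only [mul_assoc] at hs ⊢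
    rw [hs]
  let r : L → L → Prop := fun a b => b.1 * a.1 = a.1
  have trans : ∀ {a b c}, r a b → r b c → r a c := by
    intro a b c h1 h2
    change c.1 * a.1 = a.1
    change b.1 * a.1 = a.1 at h1
    change c.1 * b.1 = b.1 at h2
    rw [← h1, ← mul_assoc, h2]
  obtain ⟨x, hx⟩ := exists_maximal_of_chains_bounded (r := r) (fun c hc => by
    rcases c.eq_empty_or_nonempty with rfl | ⟨x₀, hx₀⟩
    · exact ⟨⟨m, 1, by simp⟩, by simp⟩
    let E : c → Set (Q × Q) := fun i =>
      {p | ∃ y ∈ Y, p = (y, y)} ∪ {p | ∃ q : Q, p = (m.1 (i.1.1.1 q), i.1.1.1 q)}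
    obtain ⟨φ, hφ⟩ := pinj_compact R hQ E (fun F => by
      rcases F.eq_empty_or_nonempty with rfl | hF
      · exact ⟨0, by simp⟩
      obtain ⟨j, hj, hjF⟩ := chain_finset_top (r := r) trans hc F hF
      obtain ⟨⟨y, t, rfl⟩, ht⟩ := hL j.1
      refine ⟨t.1, ?_⟩
      rintro i hi x (⟨y, hy, rfl⟩ | ⟨q, rfl⟩)
      · exact t.2 y hy
      · have h : t * m * i.1.1 = i.1.1 := by
          rcases hjF i hi with rfl | h
          · exact ht
          · change j.1.1 * i.1.1 = i.1.1 at h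
            rw [← h, ← mul_assoc]
            exact congrArg (· * i.1.1) ht
        exact LinearMap.congr_fun (congrArg Subtype.val h) q)
    let t : fixMonoid R Q Y := ⟨φ, fun y hy => hφ ⟨x₀, hx₀⟩ _ (Or.inl ⟨y, hy, rfl⟩)⟩
    refine ⟨⟨t * m, t, rfl⟩, fun a ha => ?_⟩
    apply Subtype.ext
    refine LinearMap.ext fun q => ?_
    exact hφ ⟨a, ha⟩ _ (Or.inr ⟨q, rfl⟩)) trans
  obtain ⟨y, hy⟩ := hL x
  have hxy : x.1 * y.1 = y.1 := hx y hy
  obtain ⟨t0, ht0⟩ := y.2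
  refine ⟨y.1, ?_, fun t => ?_⟩
  · calc y.1 * y.1 = y.1 * (x.1 * y.1) := by rw [hxy]
      _ = y.1 := by rw [← mul_assoc, hy, hxy]
  · obtain ⟨s, hs⟩ := hm (t * t0)
    refine ⟨t0 * s, ?_⟩
    rw [ht0]
    simp only [mul_assoc] at hs ⊢
    rw [hs]

theorem ring_sb {S : Type*} [Ring S] (f k p e : S) (hkf : k * f = 1) (hpf : p * f = 0)
    (hpp : p * p = p) (hep : e * p = 0) (hpe : p * e = 0) (hee : e * e = e)
    (he : ∀ n : ℕ, e * (f ^ (n + 1) * p) = f ^ (n + 1) * p)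
    (hmin : ∀ t : S, t * p = 0 → p * t = 0 →
      (∀ n : ℕ, t * (f ^ (n + 1) * p) = f ^ (n + 1) * p) →
      ∃ s : S, s * p = 0 ∧ p * s = 0 ∧ (∀ n : ℕ, s * (f ^ (n + 1) * p) = f ^ (n + 1) * p) ∧
        s * (t * e) = e) :
    ∃ a b : S, b * a = 1 ∧ a * b = 1 - p := by
  have left : ∀ t : S, e * t = t → t * e = t →
      (∀ n : ℕ, t * (f ^ (n + 1) * p) = f ^ (n + 1) * p) →
      ∃ b, e * b = b ∧ b * e = b ∧ (∀ n : ℕ, b * (f ^ (n + 1) * p) = f ^ (n + 1) * p) ∧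
        b * t = e := by
    intro t h1 h2 h3
    obtain ⟨s, -, -, hs, hs'⟩ := hmin t (by rw [← h2, mul_assoc, hep, mul_zero])
      (by rw [← h1, ← mul_assoc, hpe, zero_mul]) h3
    refine ⟨e * s * e, ?_, ?_, fun n => ?_, ?_⟩
    · rw [← mul_assoc, ← mul_assoc, hee]
    · rw [mul_assoc, hee]
    · rw [mul_assoc, mul_assoc, he, hs, he]
    · rw [h2] at hs'
      rw [mul_assoc, mul_assoc, h1, hs', hee]
  have inv : ∀ t : S, e * t = t → t * e = t →
      (∀ n : ℕ, t * (f ^ (n + 1) * p) = f ^ (n + 1) * p) →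
      ∃ b, e * b = b ∧ b * e = b ∧ b * t = e ∧ t * b = e := by
    intro t h1 h2 h3
    obtain ⟨b, b1, b2, b3, b4⟩ := left t h1 h2 h3
    obtain ⟨c, c1, c2, c3, c4⟩ := left b b1 b2 b3
    have : c = t := by
      calc c = c * (b * t) := by rw [b4, c2]
        _ = t := by rw [← mul_assoc, c4, h1]
    exact ⟨b, b1, b2, b4, this ▸ c4⟩
  have hef : e * (f * p) = f * p := by simpa using he 0
  have hkk : ∀ x, k * (f * x) = x := fun x => by rw [← mul_assoc, hkf, one_mul]
  have hpf' : ∀ x, p * (f * x) = 0 := fun x => by rw [← mul_assoc, hpf, zero_mul]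
  have hpp' : ∀ x, p * (p * x) = p * x := fun x => by rw [← mul_assoc, hpp]
  have hep' : ∀ x, e * (p * x) = 0 := fun x => by rw [← mul_assoc, hep, zero_mul]
  have hpe' : ∀ x, p * (e * x) = 0 := fun x => by rw [← mul_assoc, hpe, zero_mul]
  have hee' : ∀ x, e * (e * x) = e * x := fun x => by rw [← mul_assoc, hee]
  -- the two composites
  obtain ⟨b, b1, b2, b3, b4⟩ := inv (e * (f * ((p + e) * (k * e))))
    (by rw [hee']) (by simp only [mul_assoc, hee]) (fun n => by
      simp only [mul_assoc]
      rw [he, pow_succ', mul_assoc, hkk]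
      rcases n with _ | n
      · simp [add_mul, hpp, hep, hef]
      · have h1 : p * (f ^ (n + 1) * p) = 0 := by rw [pow_succ', mul_assoc, hpf']
        rw [add_mul, h1, he, zero_add, ← mul_assoc f, ← pow_succ', he])
  obtain ⟨d, d1, d2, d3, d4⟩ := inv (e * (k * (e * (f * e))))
    (by rw [hee']) (by simp only [mul_assoc, hee]) (fun n => by
      simp only [mul_assoc]
      rw [he, ← mul_assoc f, ← pow_succ', he, pow_succ', mul_assoc, hkk, he])
  have be' : ∀ x, b * (e * x) = b * x := fun x => by rw [← mul_assoc, b2]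
  set g := p + e with hg
  have hgg : g * g = g := by simp [hg, add_mul, mul_add, hpp, hpe, hep, hee]
  have hgg' : ∀ x, g * (g * x) = g * x := fun x => by rw [← mul_assoc, hgg]
  have heg : e * g = e := by simp [hg, mul_add, hep, hee]
  have hge : g * e = e := by simp [hg, add_mul, hpe, hee]
  have hpg : p * g = p := by simp [hg, mul_add, hpp, hpe]
  have heg' : ∀ x, e * (g * x) = e * x := fun x => by rw [← mul_assoc, heg]
  have hge' : ∀ x, g * (e * x) = e * x := fun x => by rw [← mul_assoc, hge]
  have hpg' : ∀ x, p * (g * x) = p * x := fun x => by rw [← mul_assoc, hpg]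
  -- α = e f g, β = g k e, c = βα
  obtain ⟨α, hα⟩ : ∃ α, α = e * (f * g) := ⟨_, rfl⟩
  obtain ⟨β, hβ⟩ : ∃ β, β = g * (k * e) := ⟨_, rfl⟩
  have hαβ : α * β = e * (f * (g * (k * e))) := by
    rw [hα, hβ]; simp only [mul_assoc, hgg']
  have hcp : β * (α * p) = p := by
    have : g * p = p := by simp [hg, add_mul, hpp, hep]
    rw [hα, hβ]; simp only [mul_assoc, this, hef, hee', hkk]
  have hec : e * (β * (α * e)) = e * (k * (e * (f * e))) := by
    rw [hα, hβ]; simp only [mul_assoc, heg', hge, hee']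
  have hαg : α * g = α := by rw [hα]; simp only [mul_assoc, hgg]
  have hcg : β * α = p + β * (α * e) := by
    calc β * α = β * (α * g) := by rw [hαg]
      _ = _ := by rw [hg, mul_add, mul_add, hcp]
  have hec2 : e * (β * α) = e * (k * (e * (f * e))) := by
    rw [hcg, mul_add, hep, zero_add, hec]
  have hdc : d * (β * α) = e := by
    calc d * (β * α) = d * (e * (β * α)) := by rw [← mul_assoc d e, d2]
      _ = e := by rw [hec2, d3]
  have hl : (p + d - p * (β * α) * d) * (β * α) = g := by
    rw [sub_mul, add_mul, hdc, mul_assoc (p * (β * α)), hdc, mul_assoc, mul_assoc, hcg, mul_add,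
      hpp, hg]
    abel
  have hgβ : g * β = β := by rw [hβ, hgg']
  have hβe : β * e = β := by rw [hβ]; simp only [mul_assoc, hee]
  have heα : e * α = α := by rw [hα, hee']
  rw [← hαβ] at b3 b4
  have hfin : β * (b * α) = g := by
    calc β * (b * α) = g * (β * (b * α)) := by rw [← mul_assoc g, hgβ]
      _ = (p + d - p * (β * α) * d) * (β * (((α * β) * b) * α)) := by
          rw [← hl]; simp only [mul_assoc]
      _ = g := by rw [b4, heα, hl]
  have hαo : α * (1 - g) = 0 := by rw [mul_sub, mul_one, hαg, sub_self]
  have hoβ : (1 - g) * β = 0 := by rw [sub_mul, one_mul, hgβ, sub_self]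
  have hoo : (1 - g) * (1 - g) = 1 - g := by
    rw [sub_mul, one_mul, mul_sub, mul_one, hgg, sub_self, sub_zero]
  have hoα : (1 - g) * α = 0 := by
    rw [sub_mul, one_mul, ← heα, hge', sub_self]
  have hbo : b * (1 - g) = 0 := by
    rw [mul_sub, mul_one, ← b2, mul_assoc, heg, sub_self]
  refine ⟨(1 - g) + α, (1 - g) + β * b, ?_, ?_⟩
  · rw [add_mul, mul_add, mul_add, hoo, hoα, mul_assoc, hbo, mul_assoc, hfin]
    simp
  · rw [add_mul, mul_add, mul_add, hoo, hαo, ← mul_assoc, hoβ, ← mul_assoc, b4, hg, zero_mul]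
    abel

/-- Schröder–Bernstein for pure-injective modules. -/
theorem pinj_sb {P Q : Type u} [AddCommGroup P] [Module R P] [AddCommGroup Q] [Module R Q]
    (hQ : IsPureInjective R Q) (F : P →ₗ[R] Q) (K : Q →ₗ[R] P) (hKF : K ∘ₗ F = LinearMap.id)
    (G : Q →ₗ[R] P) (L : P →ₗ[R] Q) (hLG : L ∘ₗ G = LinearMap.id) :
    ∃ (a : P →ₗ[R] Q) (b : Q →ₗ[R] P), b ∘ₗ a = LinearMap.id ∧ a ∘ₗ b = LinearMap.id := by
  have hKF' : ∀ x, K (F x) = x := fun x => LinearMap.congr_fun hKF x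
  have hLG' : ∀ x, L (G x) = x := fun x => LinearMap.congr_fun hLG x
  let f : Module.End R P := G ∘ₗ F
  let k : Module.End R P := K ∘ₗ L
  let p : Module.End R P := 1 - G ∘ₗ L
  have hp : ∀ x, p x = x - G (L x) := fun x => rfl
  let Y : Set Q := {q | ∃ (n : ℕ) (x : P), q = L ((f ^ (n + 1) * p) x)}
  obtain ⟨e, hee, hmin⟩ := exists_min_idem R hQ Y
  have hGL : ∀ (n : ℕ) x, G (L ((f ^ (n + 1) * p) x)) = (f ^ (n + 1) * p) x := by
    intro n x
    rw [pow_succ', mul_assoc, Module.End.mul_apply]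
    change G (L (G (F _))) = G (F _)
    rw [hLG']
  have hee' : ∀ x, e.1 (e.1 x) = e.1 x := fun x =>
    LinearMap.congr_fun (congrArg Subtype.val hee) x
  have hfix : ∀ (t : fixMonoid R Q Y) (n : ℕ),
      (G ∘ₗ t.1 ∘ₗ L : Module.End R P) * (f ^ (n + 1) * p) = f ^ (n + 1) * p := by
    intro t n
    refine LinearMap.ext fun x => ?_
    change G (t.1 (L ((f ^ (n + 1) * p) x))) = _
    rw [t.2 _ ⟨n, x, rfl⟩, hGL]
  have hzp : ∀ t : Module.End R Q, (G ∘ₗ t ∘ₗ L : Module.End R P) * p = 0 := by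
    intro t
    refine LinearMap.ext fun x => ?_
    change G (t (L (p x))) = 0
    rw [hp, map_sub, hLG', sub_self, map_zero, map_zero]
  have hpz : ∀ t : Module.End R Q, p * (G ∘ₗ t ∘ₗ L : Module.End R P) = 0 := by
    intro t
    refine LinearMap.ext fun x => ?_
    change p (G (t (L x))) = 0
    rw [hp, hLG', sub_self]
  obtain ⟨a, b, hba, hab⟩ := ring_sb f k p (G ∘ₗ e.1 ∘ₗ L)
    (LinearMap.ext fun x => by
      change K (L (G (F x))) = x
      rw [hLG', hKF'])
    (LinearMap.ext fun x => by
      change p (G (F x)) = 0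
      rw [hp, hLG', sub_self])
    (LinearMap.ext fun x => by
      change p (p x) = p x
      rw [hp (p x), hp x, map_sub, hLG', sub_self, map_zero, sub_zero])
    (hzp _) (hpz _)
    (LinearMap.ext fun x => by
      change G (e.1 (L (G (e.1 (L x))))) = G (e.1 (L x))
      rw [hLG', hee'])
    (hfix e)
    (fun t h1 h2 h3 => by
      obtain ⟨s, hs⟩ := hmin ⟨L ∘ₗ t ∘ₗ G, by
        rintro y ⟨n, x, rfl⟩
        change L (t (G (L _))) = _
        rw [hGL]
        exact congrArg L (LinearMap.congr_fun (h3 n) x)⟩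
      refine ⟨G ∘ₗ s.1 ∘ₗ L, hzp _, hpz _, hfix s, ?_⟩
      refine LinearMap.ext fun x => ?_
      exact congrArg G (LinearMap.congr_fun (congrArg Subtype.val hs) (L x)))
  have hba' : ∀ x, b (a x) = x := fun x => LinearMap.congr_fun hba x
  have hab' : ∀ x, a (b x) = G (L x) := fun x => by
    have h := LinearMap.congr_fun hab x
    change a (b x) = x - p x at h
    rw [h, hp, sub_sub_cancel]
  refine ⟨L ∘ₗ a, b ∘ₗ G, LinearMap.ext fun x => ?_, LinearMap.ext fun x => ?_⟩
  · change b (G (L (a x))) = x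
    rw [← hab', hba', hba']
  · change L (a (b (G x))) = x
    rw [hab', hLG', hLG']

/-- A pure monomorphism `M → N` induces a split monomorphism on envelopes. -/
theorem env_split {M N P Q : Type u} [AddCommGroup M] [Module R M] [AddCommGroup N] [Module R N]
    [AddCommGroup P] [Module R P] [AddCommGroup Q] [Module R Q]
    {i : M →ₗ[R] P} {j : N →ₗ[R] Q} (hi : IsPureInjectiveEnvelope R M P i)
    (hj : IsPureInjectiveEnvelope R N Q j) (f : M →ₗ[R] N) (hf : IsPureMono R f) :
    ∃ (F : P →ₗ[R] Q) (K : Q →ₗ[R] P), K ∘ₗ F = LinearMap.id ∧ F ∘ₗ i = j ∘ₗ f := by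
  obtain ⟨-, hP, hext, haut⟩ := hi
  obtain ⟨⟨hj1, hj2⟩, hQ, -, -⟩ := hj
  obtain ⟨F, hF⟩ := hext Q hQ (j ∘ₗ f)
  obtain ⟨k, hk⟩ := hP M Q (j ∘ₗ f)
    ⟨hj1.comp hf.1, fun m n r a h => hf.2 m n r a (hj2 m n r (fun i => f (a i)) h)⟩ i
  have hb := haut (k ∘ₗ F) (by rw [LinearMap.comp_assoc, hF, hk])
  let h := LinearEquiv.ofBijective (k ∘ₗ F) hb
  refine ⟨F, h.symm.toLinearMap ∘ₗ k, LinearMap.ext fun x => ?_, hF⟩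
  exact h.symm_apply_apply x

end Aux

/-- If `M` and `N` are pure-quasi-injective and there are pure monomorphisms `M → N` and
`N → M`, then `M ≅ N`. -/
theorem stmt11 (M N : Type u) [AddCommGroup M] [Module R M] [AddCommGroup N] [Module R N]
    (hM : IsPureQuasiInjective R M) (hN : IsPureQuasiInjective R N)
    (f : M →ₗ[R] N) (hf : IsPureMono R f)
    (g : N →ₗ[R] M) (hg : IsPureMono R g) :
    Nonempty (M ≃ₗ[R] N) := by
  obtain ⟨P, _, _, i, hi, hMi⟩ := hM
  obtain ⟨Q, _, _, j, hj, hNj⟩ := hN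
  obtain ⟨F, K, hKF, hF⟩ := env_split R hi hj f hf
  obtain ⟨G, L, hLG, hG⟩ := env_split R hj hi g hg
  obtain ⟨a, b, hba, hab⟩ := pinj_sb R hj.2.1 F K hKF G L hLG
  obtain ⟨n, hn⟩ := hNj (a ∘ₗ K)
  obtain ⟨m, hm⟩ := hMi (b ∘ₗ L)
  have h1 : ∀ x, j (n (f x)) = a (i x) := fun x => by
    have e1 : j (n (f x)) = a (K (j (f x))) := LinearMap.congr_fun hn (f x)
    have e2 : F (i x) = j (f x) := LinearMap.congr_fun hF x
    have e3 : K (F (i x)) = i x := LinearMap.congr_fun hKF (i x)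
    rw [e1, ← e2, e3]
  have h2 : ∀ x, i (m (g x)) = b (j x) := fun x => by
    have e1 : i (m (g x)) = b (L (i (g x))) := LinearMap.congr_fun hm (g x)
    have e2 : G (j x) = i (g x) := LinearMap.congr_fun hG x
    have e3 : L (G (j x)) = j x := LinearMap.congr_fun hLG (j x)
    rw [e1, ← e2, e3]
  refine ⟨LinearEquiv.ofLinear (n ∘ₗ f) (m ∘ₗ g) (LinearMap.ext fun x => ?_)
    (LinearMap.ext fun x => ?_)⟩
  · apply hj.1.1
    change j (n (f (m (g x)))) = j x
    rw [h1, h2]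
    exact LinearMap.congr_fun hab (j x)
  · apply hi.1.1
    change i (m (g (n (f x)))) = i x
    rw [h2, h1]
    exact LinearMap.congr_fun hba (i x)
end
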